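/- Let k/2 < ℓ < k with ℓ dividing n, let H be a k-uniform hypergraph on [n] with m edges and density p = m/binom(n,k), and let ε = ε(n) satisfy ε < 1 and ε^5 n^{1/2} p² / log³n → ∞. Suppose that H satisfies properties P_a, P_b, P_c, P_d, P_e, P_f with parameter ε. Then H contains a collection of at least (1 − 2ε^{1/3}) m/ν_ℓ pairwise edge-disjoint type ℓ Hamilton cycles, where ν_ℓ = n/ℓ. -/

import Mathlib

open Finset Filter

/-- The edges of the type-`ℓ` Hamilton cycle in a `k`-uniform hypergraph on `Fin n`
induced by a cyclic ordering `f : ZMod n ≃ Fin n`: the `i`-th edge consists of the `k`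
consecutive vertices in positions `iℓ, iℓ+1, …, iℓ+k-1` (cyclically). -/
def typeCycleEdges (n k ℓ : ℕ) (f : ZMod n ≃ Fin n) : Finset (Finset (Fin n)) :=
  (Finset.range (n / ℓ)).image fun i =>
    (Finset.range k).image fun j => f ((i * ℓ + j : ℕ) : ZMod n)

/-- `C` is a type-`ℓ` Hamilton cycle of the `k`-uniform hypergraph `H` on `Fin n`:
a collection of `n/ℓ` edges of `H` which, for some cyclic ordering of the vertices, are
exactly the sets of `k` consecutive vertices starting at the positions divisible by `ℓ`
(so consecutive edges `E_{i-1}, E_i` satisfy `|E_{i-1} ∖ E_i| = ℓ`). -/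
def IsTypeHamCycle (n k ℓ : ℕ) (H C : Finset (Finset (Fin n))) : Prop :=
  C ⊆ H ∧ C.card = n / ℓ ∧ ∃ f : ZMod n ≃ Fin n, C = typeCycleEdges n k ℓ f

/-- `H` contains at least `t` pairwise edge-disjoint type-`ℓ` Hamilton cycles. -/
def HamPackingGE (n k ℓ : ℕ) (H : Finset (Finset (Fin n))) (t : ℝ) : Prop :=
  ∃ 𝒞 : Finset (Finset (Finset (Fin n))),
    t ≤ (𝒞.card : ℝ) ∧ (∀ C ∈ 𝒞, IsTypeHamCycle n k ℓ H C) ∧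
    (𝒞 : Set (Finset (Finset (Fin n)))).Pairwise Disjoint

open scoped Classical in
/-- The neighbourhood `N_H(S)` of `S` in a `k`-uniform hypergraph `H` on `Fin n`:
the `(k - |S|)`-sets `Y` with `S ∪ Y ∈ H`. -/
def hNbhd (n k : ℕ) (H : Finset (Finset (Fin n))) (S : Finset (Fin n)) :
    Finset (Finset (Fin n)) :=
  Finset.univ.filter fun Y => Y.card = k - S.card ∧ S ∪ Y ∈ H

/-- The degree `d_H(S) = |N_H(S)|`. -/
def hDeg (n k : ℕ) (H : Finset (Finset (Fin n))) (S : Finset (Fin n)) : ℕ :=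
  (hNbhd n k H S).card

/-!
Write `a = k - ℓ`, `b = 2ℓ - k` and `n = ℓν`, so that `ℓ = a + b` and `k = 2a + b`. Arrange the
positions `0, …, n - 1` in `ν` rows of length `ℓ`, and let `Aᵢ` be the first `a` columns of the
consecutive rows `i, i + 1` and `Bⱼ` the last `b` columns of row `j`. A placement `σ` of the
vertices of `H` on the positions defines a balanced bipartite graph, `i ~ j` iff
`σ(Aᵢ ∪ Bⱼ) ∈ H`, and shearing the right blocks along a perfect matching of it turns `σ` into a
type-`ℓ` Hamilton cycle of `H`. By concentration of Lipschitz functions of a random permutation,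
the degree and codegree conditions on `H` make this graph pseudorandom for almost every `σ`.

Sample `N` such placements; then every `k`-set is a pair of blocks `Aᵢ ∪ Bⱼ` of at most `Λ` of
them, with `Λ` close to its mean. Give the occurrences of each edge of `H` distinct colours among
`Λ` and let every edge keep only the occurrence of a uniformly random colour: the bipartite graphs
of the `N` placements become edge-disjoint, each thinned to density `p / Λ` and still pseudorandom.
The min-degree and codegree bounds then give, through Ore's condition for factors, an `r`-factor
with `r` close to `pν / Λ`, which splits into `r` perfect matchings. Altogether this yields
`N r ≥ (1 - 2 ε^{1/3}) m / ν` edge-disjoint Hamilton cycles.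
-/

open scoped BigOperators

section BipartiteFactors

variable {α β : Type*} [Fintype β] [DecidableEq β]

/-- The auxiliary bipartite graph that reduces the existence of an `r`-factor of `G` to Hall's
theorem. Every edge of `G` has a copy on either side, the two copies being adjacent; `r` slots at
each left vertex see the right copies of the edges there, and `r` slots at each right vertex see
the left copies of the edges there. A matching uses an edge of `G` if its two copies are not
matched to each other. -/
def factorGadget (G : α → β → Prop) (r : ℕ) :
    (α × Fin r) ⊕ {e : α × β // G e.1 e.2} → {e : α × β // G e.1 e.2} ⊕ (β × Fin r) → Prop
  | .inl s, .inl e => e.1.1 = s.1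
  | .inl _, .inr _ => False
  | .inr e, .inl e' => e' = e
  | .inr e, .inr s => s.1 = e.1.2

theorem exists_injective_factorGadget [Finite α] {G : α → β → Prop} [DecidableRel G] {r : ℕ}
    (hG : ∀ K L, r * #K ≤ #(Rel.interedges G K L) + r * #Lᶜ) :
    ∃ f, Function.Injective f ∧ ∀ z, factorGadget G r z (f z) := by
  classical
  cases nonempty_fintype α
  rw [← Fintype.all_card_le_filter_rel_iff_exists_injective]
  intro A
  set B : Finset _ := {z | ∃ a ∈ A, factorGadget G r a z} with hB
  set K : Finset α := A.toLeft.image Prod.fst with hK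
  set V : Finset β := A.toRight.image fun e => e.1.2 with hV
  have mem_left (e) : e ∈ B.toLeft ↔ e.1.1 ∈ K ∨ e ∈ A.toRight := by
    simp only [hB, hK, mem_toLeft, mem_filter_univ, Sum.exists, factorGadget, mem_image,
      mem_toRight, eq_comm (a := e.1.1), exists_eq_right']
  have mem_right (s) : s ∈ B.toRight ↔ s.1 ∈ V := by
    simp [hB, hV, factorGadget, eq_comm]
  have slots_left : #A.toLeft ≤ r * #K := by
    have : A.toLeft ⊆ K ×ˢ univ := fun s hs => mem_product.2 ⟨mem_image_of_mem _ hs, mem_univ _⟩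
    simpa [mul_comm] using card_le_card this
  have slots_right : r * #V ≤ #B.toRight := by
    have : V ×ˢ univ ⊆ B.toRight := fun s hs => (mem_right s).2 (mem_product.1 hs).1
    simpa [mul_comm] using card_le_card this
  have edges : #(Rel.interedges G K Vᶜ) + #A.toRight ≤ #B.toLeft := by
    have hdisj : Disjoint (Rel.interedges G K Vᶜ) (A.toRight.map (.subtype _)) := by
      refine disjoint_left.2 fun e he he' => ?_
      obtain ⟨e, heA, rfl⟩ := mem_map.1 he'
      exact mem_compl.1 (Rel.mem_interedges_iff.1 he).2.1 (mem_image_of_mem _ heA)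
    have hsub : Rel.interedges G K Vᶜ ∪ A.toRight.map (.subtype _) ⊆
        B.toLeft.map (.subtype _) := by
      refine union_subset (fun e he => ?_) (map_subset_map.2 fun e he => (mem_left e).2 (.inr he))
      obtain ⟨heK, -, heG⟩ := Rel.mem_interedges_iff.1 he
      exact mem_map.2 ⟨⟨e, heG⟩, (mem_left _).2 (.inl heK), rfl⟩
    simpa [card_union_of_disjoint hdisj] using card_le_card hsub
  have ore := hG K Vᶜ
  rw [compl_compl] at ore
  rw [← card_toLeft_add_card_toRight (u := A), ← card_toLeft_add_card_toRight (u := B)]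
  lia

open scoped Classical in
theorem le_card_factorGadget_left {G : α → β → Prop} {r : ℕ}
    {f : (α × Fin r) ⊕ {e : α × β // G e.1 e.2} → {e : α × β // G e.1 e.2} ⊕ (β × Fin r)}
    (hf : Function.Injective f) (hadj : ∀ z, factorGadget G r z (f z)) (x : α) :
    r ≤ #{y | ∃ h : G x y, ∃ s, f (.inr ⟨(x, y), h⟩) = .inr s} := by
  have slot (i : Fin r) : ∃ y, ∃ h : G x y, f (.inl (x, i)) = .inl ⟨(x, y), h⟩ := by
    have := hadj (.inl (x, i))
    rcases hfi : f (.inl (x, i)) with e | s <;> rw [hfi] at this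
    · obtain ⟨⟨_, y⟩, h⟩ := e
      obtain rfl : _ = x := this
      exact ⟨y, h, rfl⟩
    · exact this.elim
  choose y hy hfy using slot
  have hmaps (i : Fin r) : ∃ h : G x (y i), ∃ s, f (.inr ⟨(x, y i), h⟩) = .inr s := by
    rcases he : f (.inr ⟨(x, y i), hy i⟩) with e | s
    · have := hadj (.inr ⟨(x, y i), hy i⟩)
      rw [he] at this
      obtain rfl : e = _ := this
      exact absurd (hf (he.trans (hfy i).symm)) Sum.inr_ne_inl
    · exact ⟨hy i, s, he⟩
  have hinj : Set.InjOn y (univ : Finset (Fin r)) := fun i _ j _ hij => by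
    have : f (.inl (x, i)) = f (.inl (x, j)) := by simp only [hfy, hij]
    simpa using hf this
  simpa only [card_fin] using card_le_card_of_injOn y (fun i _ => by simpa using hmaps i) hinj

open scoped Classical in
theorem card_factorGadget_right_le [Fintype α] {G : α → β → Prop} {r : ℕ}
    {f : (α × Fin r) ⊕ {e : α × β // G e.1 e.2} → {e : α × β // G e.1 e.2} ⊕ (β × Fin r)}
    (hf : Function.Injective f) (hadj : ∀ z, factorGadget G r z (f z)) (y : β) :
    #{x | ∃ h : G x y, ∃ s, f (.inr ⟨(x, y), h⟩) = .inr s} ≤ r := by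
  have slot (x : {x // ∃ h : G x y, ∃ s, f (.inr ⟨(x, y), h⟩) = .inr s}) :
      ∃ h : G x y, ∃ i : Fin r, f (.inr ⟨(x, y), h⟩) = .inr (y, i) := by
    obtain ⟨h, ⟨y', i⟩, hi⟩ := x.2
    have := hadj (.inr ⟨(x, y), h⟩)
    rw [hi] at this
    obtain rfl : y' = y := this
    exact ⟨h, i, hi⟩
  choose h i hi using slot
  have hinj : Function.Injective i := fun x x' hxx' => by
    have := hf ((hi x).trans (hxx' ▸ (hi x').symm))
    simpa [Subtype.ext_iff] using this
  simpa [Fintype.card_subtype] using Fintype.card_le_of_injective i hinj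

theorem exists_factor [Fintype α] {G : α → β → Prop} [DecidableRel G] {r : ℕ}
    (hcard : Fintype.card α = Fintype.card β)
    (hG : ∀ K L, r * #K ≤ #(Rel.interedges G K L) + r * #Lᶜ) :
    ∃ F : α → Finset β, (∀ x, ∀ y ∈ F x, G x y) ∧ (∀ x, #(F x) = r) ∧
      ∀ y, #{x | y ∈ F x} = r := by
  classical
  obtain ⟨f, hf, hadj⟩ := exists_injective_factorGadget hG
  let F (x : α) : Finset β := {y | ∃ h : G x y, ∃ s, f (.inr ⟨(x, y), h⟩) = .inr s}
  have le_left (x : α) : r ≤ #(F x) := by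
    convert le_card_factorGadget_left hf hadj x
  have le_right (y : β) : #{x | y ∈ F x} ≤ r := by
    simp only [F, mem_filter_univ]
    convert card_factorGadget_right_le hf hadj y
  have double_count : ∑ x, #(F x) = ∑ y, #{x | y ∈ F x} := by
    simpa [bipartiteAbove, bipartiteBelow] using
      sum_card_bipartiteAbove_eq_sum_card_bipartiteBelow (s := univ) (t := univ) fun x y => y ∈ F x
  have hsum_left : ∑ _x : α, r ≤ ∑ x, #(F x) := sum_le_sum fun x _ => le_left x
  have hsum_right : ∑ y, #{x | y ∈ F x} ≤ ∑ _y : β, r := sum_le_sum fun y _ => le_right y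
  have hsum : ∑ _x : α, r = ∑ _y : β, r := by simp [hcard]
  refine ⟨F, fun x y hy => (mem_filter_univ _).1 hy |>.1, fun x => ?_, fun y => ?_⟩
  · exact ((sum_eq_sum_iff_of_le fun x _ => le_left x).1 (by lia) x (mem_univ x)).symm
  · exact (sum_eq_sum_iff_of_le fun y _ => le_right y).1 (by lia) y (mem_univ y)

variable [Fintype α]

theorem exists_perfectMatching_of_regular (hcard : Fintype.card α = Fintype.card β) {r : ℕ}
    {F : α → Finset β} (hleft : ∀ x, #(F x) = r + 1) (hright : ∀ y, #{x | y ∈ F x} = r + 1) :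
    ∃ π : α ≃ β, ∀ x, π x ∈ F x := by
  have hall (K : Finset α) : #K ≤ #(K.biUnion F) := by
    refine Nat.le_of_mul_le_mul_right (?_ : _ * (r + 1) ≤ _ * (r + 1)) r.succ_pos
    refine card_mul_le_card_mul (fun x y => y ∈ F x) (fun x hx => ?_) fun y _ => ?_
    · rw [bipartiteAbove, filter_mem_eq_inter, inter_eq_right.2 (subset_biUnion_of_mem F hx), hleft]
    · exact (card_le_card (filter_subset_filter _ (subset_univ K))).trans (hright y).le
  obtain ⟨m, hm, hmF⟩ := (all_card_le_biUnion_card_iff_exists_injective F).1 hall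
  exact ⟨.ofBijective m ((Fintype.bijective_iff_injective_and_card m).2 ⟨hm, hcard⟩), hmF⟩

theorem exists_disjoint_perfectMatchings_of_regular (hcard : Fintype.card α = Fintype.card β)
    {r : ℕ} {F : α → Finset β} (hleft : ∀ x, #(F x) = r) (hright : ∀ y, #{x | y ∈ F x} = r) :
    ∃ π : Fin r → α ≃ β, (∀ s x, π s x ∈ F x) ∧ ∀ x, Function.Injective fun s => π s x := by
  induction r generalizing F with
  | zero => exact ⟨fun s => s.elim0, fun s => s.elim0, fun _ s => s.elim0⟩
  | succ r ih =>
    obtain ⟨μ, hμ⟩ := exists_perfectMatching_of_regular hcard hleft hright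
    have hright' (y : β) : #{x | y ∈ (F x).erase (μ x)} = r := by
      classical
      have : ({x | y ∈ (F x).erase (μ x)} : Finset α) =
          ({x | y ∈ F x} : Finset α).erase (μ.symm y) := by
        ext x
        simp [Equiv.eq_symm_apply, eq_comm]
      rw [this, card_erase_of_mem (by simpa using hμ (μ.symm y)), hright, Nat.add_sub_cancel]
    obtain ⟨π, hπ, hinj⟩ := ih (F := fun x => (F x).erase (μ x))
      (fun x => by rw [card_erase_of_mem (hμ x), hleft, Nat.add_sub_cancel]) hright'
    refine ⟨Fin.cons μ π, fun s x => ?_, fun x => ?_⟩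
    · cases s using Fin.cases with
      | zero => exact hμ x
      | succ s => exact mem_of_mem_erase (hπ s x)
    · have : (fun s => (Fin.cons μ π : Fin (r + 1) → α ≃ β) s x) =
          (Fin.cons (μ x) fun s => π s x : Fin (r + 1) → β) := by
        ext s
        cases s using Fin.cases <;> rfl
      rw [this, Fin.cons_injective_iff]
      exact ⟨fun ⟨s, hs⟩ => ne_of_mem_erase (hπ s x) hs, hinj x⟩

/-- Ore's condition for an `r`-factor, followed by König's theorem. -/
theorem exists_disjoint_perfectMatchings {G : α → β → Prop} [DecidableRel G] {r : ℕ}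
    (hcard : Fintype.card α = Fintype.card β)
    (hG : ∀ K L, r * #K ≤ #(Rel.interedges G K L) + r * #Lᶜ) :
    ∃ π : Fin r → α ≃ β, (∀ s x, G x (π s x)) ∧ ∀ x, Function.Injective fun s => π s x := by
  obtain ⟨F, hFG, hleft, hright⟩ := exists_factor hcard hG
  obtain ⟨π, hπ, hinj⟩ := exists_disjoint_perfectMatchings_of_regular hcard hleft hright
  exact ⟨π, fun s x => hFG x _ (hπ s x), hinj⟩

end BipartiteFactors

section RowRegular

variable {α β : Type*}

theorem card_interedges_eq_sum_left (G : α → β → Prop) [DecidableRel G] (K : Finset α)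
    (L : Finset β) : #(Rel.interedges G K L) = ∑ x ∈ K, #{y ∈ L | G x y} := by
  simp only [Rel.interedges, card_filter, sum_product]

theorem card_interedges_eq_sum_right (G : α → β → Prop) [DecidableRel G] (K : Finset α)
    (L : Finset β) : #(Rel.interedges G K L) = ∑ y ∈ L, #{x ∈ K | G x y} := by
  simp only [Rel.interedges, card_filter, sum_product_right]

theorem card_interedges_flip (G : α → β → Prop) [DecidableRel G] [DecidableRel (flip G)]
    (K : Finset α) (L : Finset β) :
    #(Rel.interedges (flip G) L K) = #(Rel.interedges G K L) := by
  rw [card_interedges_eq_sum_left, card_interedges_eq_sum_right]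
  refine sum_congr rfl fun y _ => congrArg card <| Finset.ext fun x => ?_
  rw [mem_filter, mem_filter, flip]

variable [Fintype β] {G : α → β → Prop} [DecidableRel G]

theorem sum_sq_card_filter_rel (K : Finset α) :
    ∑ y, #{x ∈ K | G x y} ^ 2 = ∑ x ∈ K, ∑ x' ∈ K, #{y | G x y ∧ G x' y} := by
  simp only [sq, card_filter, sum_mul_sum, ite_and, mul_ite, mul_one, mul_zero]
  rw [sum_comm]
  refine sum_congr rfl fun x _ => ?_
  rw [sum_comm]
  refine sum_congr rfl fun x' _ => sum_congr rfl fun y _ => ?_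
  split_ifs <;> rfl

variable (G) in
/-- The bipartite graph `G` looks random of density `q` from its left side: up to a relative error
`η`, degrees of left vertices are at least, and codegrees at most, what they are in a random
graph. Regularity from the right side is `RowRegular (flip G) η q`. -/
structure RowRegular (η q : ℝ) : Prop where
  le_degree : ∀ x, (1 - η) * q * Fintype.card β ≤ #{y | G x y}
  codegree_le : ∀ x x', x ≠ x' →
    #{y | G x y ∧ G x' y} ≤ (1 + η) * q ^ 2 * Fintype.card β

variable {η q u : ℝ} {K : Finset α} {L : Finset β}

theorem RowRegular.le_sum_card (hG : RowRegular G η q) (K : Finset α) :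
    #K * ((1 - η) * q * Fintype.card β) ≤ ∑ y, (#{x ∈ K | G x y} : ℝ) := by
  have := card_nsmul_le_sum K (fun x => (#{y | G x y} : ℝ)) _ fun x _ => hG.le_degree x
  rw [nsmul_eq_mul] at this
  exact this.trans_eq <| mod_cast sum_card_bipartiteAbove_eq_sum_card_bipartiteBelow G

theorem RowRegular.sum_sq_card_le (hG : RowRegular G η q) (hη : 0 ≤ η) (K : Finset α) :
    ∑ y, (#{x ∈ K | G x y} : ℝ) ^ 2 ≤
      ∑ y, (#{x ∈ K | G x y} : ℝ) + #K ^ 2 * ((1 + η) * q ^ 2 * Fintype.card β) := by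
  classical
  set c : ℝ := (1 + η) * q ^ 2 * Fintype.card β
  have hrow (x) (hx : x ∈ K) :
      ∑ x' ∈ K, (#{y | G x y ∧ G x' y} : ℝ) ≤ #{y | G x y} + #K * c := by
    rw [← add_sum_erase K _ hx]
    simp only [and_self]
    gcongr
    calc ∑ x' ∈ K.erase x, (#{y | G x y ∧ G x' y} : ℝ) ≤ ∑ _x' ∈ K.erase x, c :=
          sum_le_sum fun x' hx' => hG.codegree_le x x' (ne_of_mem_erase hx').symm
      _ ≤ ∑ _x' ∈ K, c :=
          sum_le_sum_of_subset_of_nonneg (erase_subset x K) fun _ _ _ => by positivity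
      _ = #K * c := by rw [sum_const, nsmul_eq_mul]
  have hdeg : ∑ x ∈ K, (#{y | G x y} : ℝ) = ∑ y, (#{x ∈ K | G x y} : ℝ) := by
    exact_mod_cast sum_card_bipartiteAbove_eq_sum_card_bipartiteBelow G
  calc ∑ y, (#{x ∈ K | G x y} : ℝ) ^ 2
      = ∑ x ∈ K, ∑ x' ∈ K, (#{y | G x y ∧ G x' y} : ℝ) := mod_cast sum_sq_card_filter_rel K
    _ ≤ ∑ x ∈ K, (#{y | G x y} + #K * c) := sum_le_sum hrow
    _ = _ := by rw [sum_add_distrib, hdeg, sum_const, nsmul_eq_mul]; ring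

theorem RowRegular.sum_sq_sub_le (hG : RowRegular G η q) (hη : 0 ≤ η) (hq : 0 ≤ q)
    (hK : 1 ≤ 2 * (#K * q)) :
    ∑ y, ((#{x ∈ K | G x y} : ℝ) - #K * q) ^ 2 ≤
      #K * q * Fintype.card β + 3 * η * (#K * q) ^ 2 * Fintype.card β := by
  have hexpand : ∑ y, ((#{x ∈ K | G x y} : ℝ) - #K * q) ^ 2 =
      ∑ y, (#{x ∈ K | G x y} : ℝ) ^ 2 - 2 * (#K * q) * ∑ y, (#{x ∈ K | G x y} : ℝ) +
        Fintype.card β * (#K * q) ^ 2 := by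
    simp only [sub_sq, sum_add_distrib, sum_sub_distrib, sum_const, card_univ, nsmul_eq_mul,
      mul_sum]
    congr 2
    exact sum_congr rfl fun y _ => by ring
  have hfirst := mul_le_mul_of_nonneg_left (hG.le_sum_card K) (sub_nonneg.2 hK)
  have hsecond := hG.sum_sq_card_le hη K
  have : 0 ≤ η * (#K * q * Fintype.card β) := by positivity
  rw [hexpand]
  linarith

theorem sum_sub_le_of_sum_sq_sub (D : β → ℝ) (m : ℝ) {s : ℝ} (hs : 0 < s) (L : Finset β) :
    ∑ y ∈ L, (m - D y) ≤ (∑ y, (D y - m) ^ 2) / (2 * s) + #L * (s / 2) := by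
  have hpoint (y) : m - D y ≤ (D y - m) ^ 2 / (2 * s) + s / 2 := by
    have : (D y - m) ^ 2 / (2 * s) + s / 2 - (m - D y) = (D y - m + s) ^ 2 / (2 * s) := by
      field_simp
      ring
    have : 0 ≤ (D y - m + s) ^ 2 / (2 * s) := by positivity
    linarith
  calc ∑ y ∈ L, (m - D y) ≤ ∑ y ∈ L, ((D y - m) ^ 2 / (2 * s) + s / 2) :=
        sum_le_sum fun y _ => hpoint y
    _ = (∑ y ∈ L, (D y - m) ^ 2) / (2 * s) + #L * (s / 2) := by
        rw [sum_add_distrib, sum_div, sum_const, nsmul_eq_mul]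
    _ ≤ _ := by
        gcongr
        exact subset_univ L

theorem RowRegular.le_card_interedges_of_card_le (hG : RowRegular G η q) (hηu : η ≤ 0.9 * u)
    (hq : 0 ≤ q) (hu : u ≤ 1 / 2) (hK : #K ≤ u * q * Fintype.card β)
    (hKL : Fintype.card β ≤ #K + #L) :
    (1 - 1.9 * u) * q * Fintype.card β * (#K + #L - Fintype.card β) ≤
      #(Rel.interedges G K L) := by
  classical
  set n : ℝ := (Fintype.card β : ℝ)
  have hL : (#L : ℝ) ≤ n := Nat.cast_le.2 (card_le_univ L)
  have hKL' : n ≤ #K + #L := (Nat.cast_le.2 hKL).trans_eq (Nat.cast_add _ _)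
  have hqn : 0 ≤ q * n := by positivity
  have hrow (x) : (1 - η) * q * n - (n - #L) ≤ #{y ∈ L | G x y} := by
    have hsplit : #{y | G x y} ≤ #{y ∈ L | G x y} + #Lᶜ := by
      rw [← card_filter_add_card_filter_not (s := ({y | G x y} : Finset β)) (· ∈ L),
        filter_filter, filter_filter]
      gcongr <;> intro y <;> simp +contextual
    have : (#{y | G x y} : ℝ) ≤ #{y ∈ L | G x y} + (n - #L) := by
      rw [← Nat.cast_sub (card_le_univ L), ← card_compl]
      exact_mod_cast hsplit
    linarith [hG.le_degree x]
  have hmin : (1 - 1.9 * u) * q * n ≤ (1 - η) * q * n - (n - #L) := by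
    nlinarith [mul_le_mul_of_nonneg_right hηu hqn]
  calc (1 - 1.9 * u) * q * n * (#K + #L - n) ≤ (1 - 1.9 * u) * q * n * #K := by
        have : 0 ≤ 1 - 1.9 * u := by linarith
        gcongr
        linarith
    _ = #K • ((1 - 1.9 * u) * q * n) := by rw [nsmul_eq_mul]; ring
    _ ≤ ∑ x ∈ K, (#{y ∈ L | G x y} : ℝ) :=
        card_nsmul_le_sum _ _ _ fun x _ => hmin.trans (hrow x)
    _ = #(Rel.interedges G K L) := by rw [card_interedges_eq_sum_left]; push_cast; rfl

theorem ore_deviation_le {n x y u : ℝ} (hx : 0 ≤ x) (hxn : x ≤ n) (hy : 0 ≤ y)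
    (hyn : 2 * y ≤ n) (hu : 0 ≤ u) (hu2 : u ≤ 1 / 2) :
    (1 - 1.9 * u) * n * (x - y) ≤ x * (n - y) - x * u * (0.646 * n + 0.6 * (n - y)) := by
  have hxy : 0 ≤ y * (n - x) := mul_nonneg hy (by linarith)
  have hcoeff : 0 ≤ 0.05 * n * y + 0.327 * n * x - 0.7 * x * y := by
    nlinarith [mul_nonneg hx (by linarith : 0 ≤ n - 2 * y)]
  nlinarith [mul_nonneg (by linarith : 0 ≤ 1 - 2 * u) hxy, mul_nonneg hu hcoeff]

theorem RowRegular.le_card_interedges_of_lt_card (hG : RowRegular G η q) (hη : 0 ≤ η)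
    (hηu : η ≤ 1.01 * u ^ 3) (hq : 0 < q) (hu : 0 < u) (hu2 : u ≤ 1 / 2)
    (hbig : 1 ≤ 0.07 * u ^ 4 * q ^ 2 * Fintype.card β) (hK : u * q * Fintype.card β < #K)
    (hle : #K ≤ #L) (hKL : Fintype.card β ≤ #K + #L) :
    (1 - 1.9 * u) * q * Fintype.card β * (#K + #L - Fintype.card β) ≤
      #(Rel.interedges G K L) := by
  set n : ℝ := (Fintype.card β : ℝ)
  set x : ℝ := (#K : ℝ)
  have hL : (#L : ℝ) ≤ n := Nat.cast_le.2 (card_le_univ L)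
  have hKL' : n ≤ x + #L := (Nat.cast_le.2 hKL).trans_eq (Nat.cast_add _ _)
  have hle' : x ≤ #L := Nat.cast_le.2 hle
  have hxpos : 0 < x := lt_of_le_of_lt (by positivity) hK
  have hxq : 1 ≤ 0.07 * u ^ 3 * (x * q) := by
    nlinarith [mul_le_mul_of_nonneg_right hK.le (by positivity : 0 ≤ 0.07 * u ^ 3 * q)]
  have hxq' : 1 ≤ 2 * (x * q) := by
    have : u ^ 3 ≤ 1 := pow_le_one₀ hu.le (by linarith)
    nlinarith [mul_pos hxpos hq]
  have variance : ∑ y, ((#{x ∈ K | G x y} : ℝ) - x * q) ^ 2 ≤ 3.1 * u ^ 3 * (x * q) ^ 2 * n := by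
    have := hG.sum_sq_sub_le hη hq.le hxq'
    have := mul_le_mul_of_nonneg_left hxq (by positivity : 0 ≤ x * q * n)
    have := mul_le_mul_of_nonneg_right hηu (by positivity : 0 ≤ (x * q) ^ 2 * n)
    linarith
  have deviation := sum_sub_le_of_sum_sq_sub (fun y => (#{x ∈ K | G x y} : ℝ)) (x * q)
    (by positivity : 0 < 1.2 * u * (x * q)) L
  have variance_term : (∑ y, ((#{x ∈ K | G x y} : ℝ) - x * q) ^ 2) / (2 * (1.2 * u * (x * q))) ≤
      x * q * u * (0.646 * n) := by
    rw [div_le_iff₀ (by positivity)]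
    have : 0 ≤ u ^ 2 * (x * q) ^ 2 * n := by positivity
    nlinarith [mul_le_mul_of_nonneg_left hu2 this]
  have count : (#(Rel.interedges G K L) : ℝ) = ∑ y ∈ L, (#{x ∈ K | G x y} : ℝ) := by
    rw [card_interedges_eq_sum_right]
    push_cast
    rfl
  rw [sum_sub_distrib, ← count, sum_const, nsmul_eq_mul] at deviation
  have := mul_le_mul_of_nonneg_left (ore_deviation_le hxpos.le (hle'.trans hL)
    (sub_nonneg.2 hL) (by linarith) hu.le hu2) hq.le
  linarith

theorem RowRegular.le_card_interedges (hG : RowRegular G η q) (hη : 0 ≤ η)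
    (hηu : η ≤ 1.01 * u ^ 3) (hq : 0 < q) (hu : 0 < u) (hu2 : u ≤ 1 / 2)
    (hbig : 1 ≤ 0.07 * u ^ 4 * q ^ 2 * Fintype.card β)
    (hle : #K ≤ #L) (hKL : Fintype.card β ≤ #K + #L) :
    (1 - 1.9 * u) * q * Fintype.card β * (#K + #L - Fintype.card β) ≤
      #(Rel.interedges G K L) := by
  rcases le_or_gt (#K : ℝ) (u * q * Fintype.card β) with hK | hK
  · have : η ≤ 0.9 * u := by nlinarith [mul_pos hu hu]
    exact hG.le_card_interedges_of_card_le this hq.le hu2 hK hKL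
  · exact hG.le_card_interedges_of_lt_card hη hηu hq hu hu2 hbig hK hle hKL

theorem RowRegular.exists_disjoint_perfectMatchings {α : Type*} [Fintype α]
    {G : α → β → Prop} [DecidableRel G] [DecidableRel (flip G)]
    (hcard : Fintype.card α = Fintype.card β) (hG : RowRegular G η q)
    (hG' : RowRegular (flip G) η q) (hη : 0 ≤ η) (hηu : η ≤ 1.01 * u ^ 3) (hq : 0 < q) (hu : 0 < u)
    (hu2 : u ≤ 1 / 2) (hbig : 1 ≤ 0.07 * u ^ 4 * q ^ 2 * Fintype.card β) {r : ℕ}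
    (hr : r ≤ (1 - 1.9 * u) * q * Fintype.card β) :
    ∃ π : Fin r → α ≃ β, (∀ s x, G x (π s x)) ∧ ∀ x, Function.Injective fun s => π s x := by
  classical
  refine _root_.exists_disjoint_perfectMatchings hcard fun K L => ?_
  have hLc : #L + #Lᶜ = Fintype.card β := card_add_card_compl L
  rcases le_total (#K) (#Lᶜ) with hle | hlt
  · exact (Nat.mul_le_mul_left r hle).trans (Nat.le_add_left _ _)
  have key : (1 - 1.9 * u) * q * Fintype.card β * (#K + #L - Fintype.card β) ≤
      #(Rel.interedges G K L) := by
    rcases le_total (#K) (#L) with h | h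
    · exact hG.le_card_interedges hη hηu hq hu hu2 hbig h (by lia)
    · rw [← hcard] at hbig ⊢
      rw [← card_interedges_flip, add_comm (#K : ℝ)]
      exact hG'.le_card_interedges hη hηu hq hu hu2 hbig h (by lia)
  have hdiff : (#K : ℝ) + #L - Fintype.card β = #K - #Lᶜ := by rw [← hLc]; push_cast; ring
  have hpos : (0 : ℝ) ≤ #K - #Lᶜ := sub_nonneg.2 (mod_cast hlt)
  rw [hdiff] at key
  have := (mul_le_mul_of_nonneg_right hr hpos).trans key
  have : (r * #K : ℝ) ≤ #(Rel.interedges G K L) + r * #Lᶜ := by linarith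
  exact_mod_cast this

end RowRegular

section UniformProbability

variable {Ω ι : Type*} [Fintype Ω]

open scoped Classical in
/-- The probability of the event `P` for a uniformly random element of the finite type `Ω`
(`0` if `Ω` is empty). -/
noncomputable def prob (P : Ω → Prop) : ℝ := #{ω | P ω} / Fintype.card Ω

theorem prob_mono {P Q : Ω → Prop} (h : ∀ ω, P ω → Q ω) : prob P ≤ prob Q := by
  classical
  refine div_le_div_of_nonneg_right (Nat.cast_le.2 (card_le_card ?_)) (Nat.cast_nonneg _)
  exact monotone_filter_right _ fun ω _ => h ω

theorem prob_not [Nonempty Ω] (P : Ω → Prop) : prob (fun ω => ¬P ω) = 1 - prob P := by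
  classical
  have hΩ : (Fintype.card Ω : ℝ) ≠ 0 := Nat.cast_ne_zero.2 Fintype.card_ne_zero
  rw [prob, prob, eq_sub_iff_add_eq, ← add_div, div_eq_one_iff_eq hΩ, add_comm, ← Nat.cast_add]
  congr 1
  convert card_filter_add_card_filter_not (s := (univ : Finset Ω)) P
  rfl

theorem prob_or_le (P Q : Ω → Prop) : prob (fun ω => P ω ∨ Q ω) ≤ prob P + prob Q := by
  classical
  rw [prob, prob, prob, ← add_div]
  refine div_le_div_of_nonneg_right ?_ (Nat.cast_nonneg _)
  refine mod_cast (card_le_card fun ω hω => ?_).trans (card_union_le {ω | P ω} {ω | Q ω})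
  simpa using hω

theorem prob_exists_le (s : Finset ι) (P : ι → Ω → Prop) :
    prob (fun ω => ∃ i ∈ s, P i ω) ≤ ∑ i ∈ s, prob (P i) := by
  classical
  simp_rw [prob, ← sum_div]
  refine div_le_div_of_nonneg_right ?_ (Nat.cast_nonneg _)
  refine mod_cast (card_le_card fun ω hω => ?_).trans
    (card_biUnion_le (s := s) (t := fun i => {ω | P i ω}))
  simpa using hω

theorem prob_exists_le_card_mul {s : Finset ι} {P : ι → Ω → Prop} {x : ℝ}
    (h : ∀ i ∈ s, prob (P i) ≤ x) : prob (fun ω => ∃ i ∈ s, P i ω) ≤ #s * x :=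
  (prob_exists_le s P).trans ((sum_le_card_nsmul s _ x h).trans_eq (nsmul_eq_mul _ _))

theorem exists_not_of_prob_lt_one [Nonempty Ω] {P : Ω → Prop} (h : prob P < 1) :
    ∃ ω, ¬P ω := by
  classical
  by_contra! hP
  have hΩ : (Fintype.card Ω : ℝ) ≠ 0 := Nat.cast_ne_zero.2 Fintype.card_ne_zero
  simp [prob, hP, hΩ] at h

theorem prob_subtype_le {P Q : Ω → Prop} [Fintype {ω // Q ω}] :
    prob (fun ω : {ω // Q ω} => P ω) ≤ prob P / prob Q := by
  classical
  rcases isEmpty_or_nonempty Ω with hΩ | hΩ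
  · simp [prob]
  have hcard : (Fintype.card Ω : ℝ) ≠ 0 := Nat.cast_ne_zero.2 Fintype.card_ne_zero
  rw [prob, prob, prob, div_div_div_cancel_right₀ hcard, Fintype.card_subtype]
  refine div_le_div_of_nonneg_right (Nat.cast_le.2 ?_) (Nat.cast_nonneg _)
  exact card_le_card_of_injOn Subtype.val (fun ω hω => by simpa using hω)
    Subtype.val_injective.injOn

theorem prob_le_exp_neg_mul_expect_exp (X : Ω → ℝ) (a : ℝ) :
    prob (fun ω => a ≤ X ω) ≤ Real.exp (-a) * 𝔼 ω, Real.exp (X ω) := by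
  classical
  rw [prob, Fintype.expect_eq_sum_div_card, ← mul_div_assoc, mul_sum]
  refine div_le_div_of_nonneg_right ?_ (Nat.cast_nonneg _)
  rw [← sum_boole]
  refine sum_le_sum fun ω _ => ?_
  rw [← Real.exp_add]
  split_ifs with h
  · exact Real.one_le_exp (by linarith)
  · positivity

-- Compare `exp` with its chord over `[-c, c]`.
theorem expect_exp_mul_le_exp_sq [Nonempty Ω] {X : Ω → ℝ} {c : ℝ} (hc : 0 < c)
    (hX : 𝔼 ω, X ω = 0) (hXc : ∀ ω, |X ω| ≤ c) (s : ℝ) :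
    𝔼 ω, Real.exp (s * X ω) ≤ Real.exp (s ^ 2 * c ^ 2 / 2) := by
  have hchord (ω) : Real.exp (s * X ω) ≤
      Real.cosh (s * c) + X ω * (Real.sinh (s * c) / c) := by
    obtain ⟨hlo, hhi⟩ := abs_le.1 (hXc ω)
    have hconv := convexOn_exp.2 (Set.mem_univ (s * c)) (Set.mem_univ (-(s * c)))
      (show 0 ≤ (c + X ω) / (2 * c) from div_nonneg (by linarith) (by linarith))
      (show 0 ≤ (c - X ω) / (2 * c) from div_nonneg (by linarith) (by linarith))
      (by field_simp; ring)
    simp only [smul_eq_mul] at hconv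
    have hmean : (c + X ω) / (2 * c) * (s * c) + (c - X ω) / (2 * c) * -(s * c) = s * X ω := by
      field_simp; ring
    rw [hmean] at hconv
    refine hconv.trans_eq ?_
    rw [Real.cosh_eq, Real.sinh_eq]
    field_simp
    ring
  calc 𝔼 ω, Real.exp (s * X ω)
      ≤ 𝔼 ω, (Real.cosh (s * c) + X ω * (Real.sinh (s * c) / c)) :=
        expect_le_expect fun ω _ => hchord ω
    _ = Real.cosh (s * c) := by
        rw [expect_add_distrib, ← expect_mul, hX, zero_mul, add_zero, Fintype.expect_const]
    _ ≤ Real.exp (s ^ 2 * c ^ 2 / 2) := by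
        simpa only [mul_pow] using Real.cosh_le_exp_half_sq (s * c)

theorem abs_sub_expect_le [Nonempty Ω] {X : Ω → ℝ} {c : ℝ} (h : ∀ ω ω', |X ω - X ω'| ≤ c)
    (ω : Ω) : |X ω - 𝔼 ω', X ω'| ≤ c :=
  calc |X ω - 𝔼 ω', X ω'| = |𝔼 ω', (X ω - X ω')| := by
        rw [expect_sub_distrib, Fintype.expect_const]
    _ ≤ 𝔼 ω', |X ω - X ω'| := abs_expect_le _ _
    _ ≤ 𝔼 _ω' : Ω, c := expect_le_expect fun ω' _ => h ω ω'
    _ = c := Fintype.expect_const c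

theorem expect_boole_eq_prob (P : Ω → Prop) [DecidablePred P] :
    𝔼 ω, (if P ω then (1 : ℝ) else 0) = prob P := by
  rw [Fintype.expect_eq_sum_div_card, sum_boole, prob]
  congr!

theorem expect_card_filter [Fintype ι] (P : ι → Ω → Prop) [∀ ω, DecidablePred fun i => P i ω] :
    𝔼 ω, (#{i | P i ω} : ℝ) = ∑ i, prob (P i) := by
  classical
  simp_rw [← sum_boole, expect_sum_comm, ← expect_boole_eq_prob]

end UniformProbability

section PermutationConcentration

open Equiv

/-- `f` changes by at most `c` when its argument is multiplied by a transposition: the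
bounded-differences condition for functions of a random permutation. -/
def SwapLipschitz {α : Type*} [DecidableEq α] (c : ℝ) (f : Perm α → ℝ) : Prop :=
  ∀ σ x y, |f (swap x y * σ) - f σ| ≤ c

theorem SwapLipschitz.neg {α : Type*} [DecidableEq α] {c : ℝ} {f : Perm α → ℝ}
    (hf : SwapLipschitz c f) : SwapLipschitz c fun σ => -f σ := fun σ x y => by
  rw [neg_sub_neg, abs_sub_comm]
  exact hf σ x y

variable {n : ℕ}

theorem decomposeFin_symm_swap_mul (p : Fin (n + 1)) (x y : Fin n) (e : Perm (Fin n)) :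
    Perm.decomposeFin.symm (p, swap x y * e) =
      swap (swap 0 p x.succ) (swap 0 p y.succ) * Perm.decomposeFin.symm (p, e) := by
  have hinj : Function.Injective fun z : Fin n => swap 0 p z.succ :=
    (Equiv.injective _).comp (Fin.succ_injective n)
  have hne (x : Fin n) : p ≠ swap 0 p x.succ := fun h =>
    Fin.succ_ne_zero x <| (swap 0 p).injective <| by rw [← h, swap_apply_left]
  ext z
  refine Fin.cases ?_ (fun z => ?_) z
  · simp only [Perm.mul_apply, Perm.decomposeFin_symm_apply_zero]
    rw [swap_apply_of_ne_of_ne (hne x) (hne y)]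
  · simp only [Perm.mul_apply, Perm.decomposeFin_symm_apply_succ]
    rw [hinj.swap_apply x y (e z)]

theorem decomposeFin_fst (σ : Perm (Fin (n + 1))) : (Perm.decomposeFin σ).1 = σ 0 := by
  conv_rhs => rw [← Perm.decomposeFin.symm_apply_apply σ]
  exact (Perm.decomposeFin_symm_apply_zero _ _).symm

theorem expect_perm_fin_succ (F : Perm (Fin (n + 1)) → ℝ) :
    𝔼 σ, F σ = 𝔼 p, 𝔼 e, F (Perm.decomposeFin.symm (p, e)) := by
  rw [← expect_product' univ univ fun p e => F (Perm.decomposeFin.symm (p, e)), univ_product_univ]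
  exact Fintype.expect_equiv Perm.decomposeFin _ _ fun σ => by simp

-- Multiplication by `swap p r` maps the permutations sending `0` to `r` onto those sending
-- `0` to `p`.
theorem SwapLipschitz.abs_expect_fiber_sub_le {c : ℝ} {f : Perm (Fin (n + 1)) → ℝ}
    (hf : SwapLipschitz c f) (p r : Fin (n + 1)) :
    |𝔼 e, f (Perm.decomposeFin.symm (p, e)) - 𝔼 e, f (Perm.decomposeFin.symm (r, e))| ≤ c := by
  set φ : Perm (Fin n) → Perm (Fin n) := fun e =>
    (Perm.decomposeFin (swap p r * Perm.decomposeFin.symm (r, e))).2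
  have hφ (e) : Perm.decomposeFin.symm (p, φ e) = swap p r * Perm.decomposeFin.symm (r, e) := by
    rw [Equiv.symm_apply_eq]
    refine Prod.ext ?_ rfl
    rw [decomposeFin_fst, Perm.mul_apply, Perm.decomposeFin_symm_apply_zero, swap_apply_right]
  have hφ_bij : Function.Bijective φ := Finite.injective_iff_bijective.1 fun e e' h => by
    have := (hφ e).symm.trans ((congrArg (fun x => Perm.decomposeFin.symm (p, x)) h).trans (hφ e'))
    simpa using this
  have hreindex : 𝔼 e, f (Perm.decomposeFin.symm (p, e)) =
      𝔼 e, f (swap p r * Perm.decomposeFin.symm (r, e)) :=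
    (Fintype.expect_bijective φ hφ_bij _ _ fun e => by rw [hφ]).symm
  rw [hreindex, ← expect_sub_distrib]
  exact (abs_expect_le _ _).trans (expect_le univ_nonempty fun e _ => hf _ _ _)

/-- Azuma's exponential-moment bound for the martingale that reveals the values of a random
permutation one at a time. -/
theorem SwapLipschitz.expect_exp_le {c : ℝ} (hc : 0 < c) (s : ℝ) : ∀ {n : ℕ}
    {f : Perm (Fin n) → ℝ}, SwapLipschitz c f →
    𝔼 σ, Real.exp (s * (f σ - 𝔼 τ, f τ)) ≤ Real.exp (n * (s ^ 2 * c ^ 2 / 2)) := by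
  intro n
  induction n with
  | zero => intro f _; simp
  | succ n ih =>
    intro f hf
    set g : Fin (n + 1) → Perm (Fin n) → ℝ := fun p e => f (Perm.decomposeFin.symm (p, e)) with hg
    set μ := 𝔼 τ, f τ
    have hμ : μ = 𝔼 p, 𝔼 e, g p e := expect_perm_fin_succ f
    have hg_lip (p) : SwapLipschitz c (g p) := fun e x y => by
      simp only [hg, decomposeFin_symm_swap_mul]
      exact hf _ _ _
    have hfiber (p) : |𝔼 e, g p e - μ| ≤ c := by
      rw [hμ]
      exact abs_sub_expect_le hf.abs_expect_fiber_sub_le p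
    have hcond (p) : 𝔼 e, Real.exp (s * (g p e - μ)) ≤
        Real.exp (n * (s ^ 2 * c ^ 2 / 2)) * Real.exp (s * (𝔼 e, g p e - μ)) := by
      refine le_trans (le_of_eq ?_)
        (mul_le_mul_of_nonneg_right (ih (hg_lip p)) (Real.exp_nonneg _))
      rw [expect_mul]
      refine expect_congr rfl fun e _ => ?_
      rw [← Real.exp_add]
      congr 1
      ring
    have hcentred : 𝔼 p, (𝔼 e, g p e - μ) = 0 := by
      rw [expect_sub_distrib, Fintype.expect_const, hμ, sub_self]
    calc 𝔼 σ, Real.exp (s * (f σ - μ)) = 𝔼 p, 𝔼 e, Real.exp (s * (g p e - μ)) :=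
          expect_perm_fin_succ _
      _ ≤ 𝔼 p, Real.exp (n * (s ^ 2 * c ^ 2 / 2)) * Real.exp (s * (𝔼 e, g p e - μ)) :=
          expect_le_expect fun p _ => hcond p
      _ ≤ Real.exp (n * (s ^ 2 * c ^ 2 / 2)) * Real.exp (s ^ 2 * c ^ 2 / 2) := by
          rw [← mul_expect]
          gcongr
          exact expect_exp_mul_le_exp_sq hc hcentred hfiber s
      _ = Real.exp ((n + 1 : ℕ) * (s ^ 2 * c ^ 2 / 2)) := by
          rw [← Real.exp_add]
          push_cast
          ring_nf

theorem SwapLipschitz.prob_expect_add_le {c τ : ℝ} {f : Perm (Fin n) → ℝ}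
    (hf : SwapLipschitz c f) (hn : 0 < n) (hc : 0 < c) (hτ : 0 ≤ τ) :
    prob (fun σ => 𝔼 ρ, f ρ + τ ≤ f σ) ≤ Real.exp (-(τ ^ 2 / (2 * n * c ^ 2))) := by
  have : (0 : ℝ) < n := Nat.cast_pos.2 hn
  set s := τ / (n * c ^ 2) with hs
  have hs0 : 0 ≤ s := by positivity
  calc prob (fun σ => 𝔼 ρ, f ρ + τ ≤ f σ)
      ≤ prob (fun σ => s * τ ≤ s * (f σ - 𝔼 ρ, f ρ)) :=
        prob_mono fun σ hσ => mul_le_mul_of_nonneg_left (by linarith) hs0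
    _ ≤ Real.exp (-(s * τ)) * Real.exp (n * (s ^ 2 * c ^ 2 / 2)) :=
        (prob_le_exp_neg_mul_expect_exp _ _).trans
          (mul_le_mul_of_nonneg_left (hf.expect_exp_le hc s) (Real.exp_nonneg _))
    _ = Real.exp (-(τ ^ 2 / (2 * n * c ^ 2))) := by
        rw [← Real.exp_add, hs]
        congr 1
        field_simp
        ring

theorem SwapLipschitz.prob_le_expect_sub {c τ : ℝ} {f : Perm (Fin n) → ℝ}
    (hf : SwapLipschitz c f) (hn : 0 < n) (hc : 0 < c) (hτ : 0 ≤ τ) :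
    prob (fun σ => f σ ≤ 𝔼 ρ, f ρ - τ) ≤ Real.exp (-(τ ^ 2 / (2 * n * c ^ 2))) := by
  refine (prob_mono fun σ hσ => ?_).trans (hf.neg.prob_expect_add_le hn hc hτ)
  rw [expect_neg_distrib]
  linarith

end PermutationConcentration

section RandomImages

open Equiv

variable {α ι : Type*} [DecidableEq α] {c : ℕ}

theorem image_swap_mul_of_notMem {S : Finset α} {σ : Perm α} {x y : α} (hx : σ.symm x ∉ S)
    (hy : σ.symm y ∉ S) : S.image (swap x y * σ : Perm α) = S.image σ := by
  refine image_congr fun z hz => swap_apply_of_ne_of_ne ?_ ?_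
  · rintro rfl
    exact hx (by simpa using hz)
  · rintro rfl
    exact hy (by simpa using hz)

variable [Fintype ι] {Q : ι → Finset α}

theorem card_image_mem_le_swap_add {d : ℕ} (hd : ∀ x, #{i | x ∈ Q i} ≤ d)
    (𝓕 : Finset (Finset α)) (σ : Perm α) (x y : α) :
    #{i | (Q i).image σ ∈ 𝓕} ≤
      #{i | (Q i).image (swap x y * σ : Perm α) ∈ 𝓕} + 2 * d := by
  classical
  have hsub : ({i | (Q i).image σ ∈ 𝓕} : Finset ι) ⊆
      ({i | (Q i).image (swap x y * σ : Perm α) ∈ 𝓕} : Finset ι) ∪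
        (({i | σ.symm x ∈ Q i} : Finset ι) ∪ ({i | σ.symm y ∈ Q i} : Finset ι)) := by
    intro i hi
    simp only [mem_union, mem_filter_univ] at hi ⊢
    by_contra! h
    exact h.1 (by rwa [image_swap_mul_of_notMem h.2.1 h.2.2])
  calc #{i | (Q i).image σ ∈ 𝓕} ≤ _ := card_le_card hsub
    _ ≤ _ := (card_union_le _ _).trans (Nat.add_le_add_left (card_union_le _ _) _)
    _ ≤ _ := by linarith [hd (σ.symm x), hd (σ.symm y)]

theorem swapLipschitz_card_image_mem {d : ℕ} (hd : ∀ x, #{i | x ∈ Q i} ≤ d)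
    (𝓕 : Finset (Finset α)) :
    SwapLipschitz (2 * d) fun σ : Perm α => (#{i | (Q i).image σ ∈ 𝓕} : ℝ) := fun σ x y => by
  have hlo := card_image_mem_le_swap_add hd 𝓕 σ x y
  have hhi := card_image_mem_le_swap_add hd 𝓕 (swap x y * σ) x y
  rw [← mul_assoc, swap_mul_self, one_mul] at hhi
  rw [abs_le]
  constructor
  · have : (#{i | (Q i).image σ ∈ 𝓕} : ℝ) ≤
        #{i | (Q i).image (swap x y * σ : Perm α) ∈ 𝓕} + 2 * d := mod_cast hlo
    linarith
  · have : (#{i | (Q i).image (swap x y * σ : Perm α) ∈ 𝓕} : ℝ) ≤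
        #{i | (Q i).image σ ∈ 𝓕} + 2 * d := mod_cast hhi
    linarith

theorem exists_perm_image_eq {F F' : Finset α} (h : #F = #F') :
    ∃ τ : Perm α, F.image τ = F' := by
  have := Set.powersetCard.isPretransitive (α := α) (n := #F)
  obtain ⟨τ, hτ⟩ := MulAction.exists_smul_eq (Perm α) (⟨F, rfl⟩ : Set.powersetCard α #F)
    ⟨F', h.symm⟩
  exact ⟨τ, congrArg Subtype.val hτ⟩

variable [Fintype α]

theorem prob_comp_equiv {Ω Ω' : Type*} [Fintype Ω] [Fintype Ω'] (e : Ω ≃ Ω') (P : Ω' → Prop) :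
    prob (fun ω => P (e ω)) = prob P := by
  classical
  simp_rw [← expect_boole_eq_prob]
  exact Fintype.expect_equiv e _ _ fun _ => rfl

theorem prob_image_eq_of_card_eq (Q : Finset α) {F F' : Finset α} (h : #F = #F') :
    prob (fun σ : Perm α => Q.image σ = F') = prob fun σ : Perm α => Q.image σ = F := by
  obtain ⟨τ, rfl⟩ := exists_perm_image_eq h
  rw [← prob_comp_equiv (Equiv.mulLeft τ) fun σ => Q.image σ = F.image τ]
  refine congrArg prob (funext fun σ => propext ?_)
  rw [Equiv.coe_mulLeft, Perm.coe_mul, ← image_image]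
  exact (image_injective τ.injective).eq_iff

theorem prob_image_eq {Q F : Finset α} (hQ : #Q = c) (hF : #F = c) :
    prob (fun σ : Perm α => Q.image σ = F) = 1 / (Fintype.card α).choose c := by
  have htotal : ∑ F' ∈ powersetCard c univ, prob (fun σ : Perm α => Q.image σ = F') = 1 := by
    have hmem (σ : Perm α) : Q.image σ ∈ powersetCard c univ :=
      mem_powersetCard.2 ⟨subset_univ _, by rw [card_image_of_injective _ σ.injective, hQ]⟩
    simp_rw [← expect_boole_eq_prob, ← expect_sum_comm, sum_ite_eq, hmem, if_true]
    exact Fintype.expect_one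
  rw [sum_congr rfl fun F' hF' =>
    prob_image_eq_of_card_eq Q (hF.trans (mem_powersetCard.1 hF').2.symm), sum_const,
    card_powersetCard, card_univ, nsmul_eq_mul, mul_comm] at htotal
  exact eq_one_div_of_mul_eq_one_left htotal

theorem prob_image_mem {Q : Finset α} {𝓕 : Finset (Finset α)} (hQ : #Q = c)
    (h𝓕 : ∀ F ∈ 𝓕, #F = c) :
    prob (fun σ : Perm α => Q.image σ ∈ 𝓕) = #𝓕 / (Fintype.card α).choose c := by
  have hsum : prob (fun σ : Perm α => Q.image σ ∈ 𝓕) =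
      ∑ F ∈ 𝓕, prob fun σ : Perm α => Q.image σ = F := by
    simp_rw [← expect_boole_eq_prob, ← expect_sum_comm, sum_ite_eq]
  rw [hsum, sum_congr rfl fun F hF => prob_image_eq hQ (h𝓕 F hF), sum_const, nsmul_eq_mul,
    mul_one_div]

theorem expect_card_image_mem {𝓕 : Finset (Finset α)} (hQ : ∀ i, #(Q i) = c)
    (h𝓕 : ∀ F ∈ 𝓕, #F = c) :
    𝔼 σ : Perm α, (#{i | (Q i).image σ ∈ 𝓕} : ℝ) =
      Fintype.card ι * #𝓕 / (Fintype.card α).choose c := by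
  rw [expect_card_filter fun i (σ : Perm α) => (Q i).image σ ∈ 𝓕,
    sum_congr rfl fun i _ => prob_image_mem (hQ i) h𝓕, sum_const, card_univ, nsmul_eq_mul,
    mul_div_assoc]

end RandomImages

section PoissonTails

variable {Ω E ι : Type*} [Fintype Ω]

/-- The moment generating function of `X` is at most that of a Poisson variable of mean `μ`. -/
def HasPoissonMGF (X : Ω → ℝ) (μ : ℝ) : Prop :=
  ∀ s, 𝔼 ω, Real.exp (s * X ω) ≤ Real.exp (μ * (Real.exp s - 1))

theorem exp_sub_one_le_add_sq {s : ℝ} (hs : |s| ≤ 1) : Real.exp s - 1 ≤ s + s ^ 2 := by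
  linarith [(abs_le.1 (Real.abs_exp_sub_one_sub_id_le hs)).2]

theorem HasPoissonMGF.prob_add_le {X : Ω → ℝ} {μ m M t : ℝ} (hX : HasPoissonMGF X μ)
    (hμm : μ ≤ m) (hm : 0 ≤ m) (hmM : m ≤ M) (hM : 0 < M) (ht : 0 ≤ t) (htM : t ≤ 2 * M) :
    prob (fun ω => m + t ≤ X ω) ≤ Real.exp (-(t ^ 2 / (4 * M))) := by
  set s := t / (2 * M) with hs
  have hs0 : 0 ≤ s := by positivity
  have hs1 : s ≤ 1 := (div_le_one (by positivity)).2 htM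
  have hexp := exp_sub_one_le_add_sq (abs_le.2 ⟨by linarith, hs1⟩)
  have hexp0 : 0 ≤ Real.exp s - 1 := by linarith [Real.add_one_le_exp s]
  have hmgf : μ * (Real.exp s - 1) ≤ m * s + M * s ^ 2 :=
    calc μ * (Real.exp s - 1) ≤ m * (s + s ^ 2) := mul_le_mul hμm hexp hexp0 hm
      _ ≤ m * s + M * s ^ 2 := by nlinarith [sq_nonneg s]
  have hst : s * t - M * s ^ 2 = t ^ 2 / (4 * M) := by rw [hs]; field_simp; ring
  calc prob (fun ω => m + t ≤ X ω)
      ≤ prob (fun ω => s * (m + t) ≤ s * X ω) :=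
        prob_mono fun ω hω => mul_le_mul_of_nonneg_left hω hs0
    _ ≤ Real.exp (-(s * (m + t))) * Real.exp (μ * (Real.exp s - 1)) :=
        (prob_le_exp_neg_mul_expect_exp _ _).trans
          (mul_le_mul_of_nonneg_left (hX s) (Real.exp_nonneg _))
    _ ≤ Real.exp (-(t ^ 2 / (4 * M))) := by
        rw [← Real.exp_add, ← hst]
        exact Real.exp_le_exp.2 (by linarith)

theorem HasPoissonMGF.prob_le_sub {X : Ω → ℝ} {μ m M t : ℝ} (hX : HasPoissonMGF X μ)
    (hmμ : m ≤ μ) (hmM : m ≤ M) (hM : 0 < M) (ht : 0 ≤ t) (htM : t ≤ 2 * M) (hμ : 0 ≤ μ) :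
    prob (fun ω => X ω ≤ m - t) ≤ Real.exp (-(t ^ 2 / (4 * M))) := by
  set s := t / (2 * M) with hs
  have hs0 : 0 ≤ s := by positivity
  have hs1 : s ≤ 1 := (div_le_one (by positivity)).2 htM
  have hexp := exp_sub_one_le_add_sq (s := -s) (abs_le.2 ⟨by linarith, by linarith⟩)
  have hmgf : μ * (Real.exp (-s) - 1) ≤ -(m * s) + M * s ^ 2 :=
    calc μ * (Real.exp (-s) - 1) ≤ μ * (-s + (-s) ^ 2) := mul_le_mul_of_nonneg_left hexp hμ
      _ ≤ m * (-s + (-s) ^ 2) := mul_le_mul_of_nonpos_right hmμ (by nlinarith)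
      _ ≤ -(m * s) + M * s ^ 2 := by nlinarith [sq_nonneg s]
  have hst : s * t - M * s ^ 2 = t ^ 2 / (4 * M) := by rw [hs]; field_simp; ring
  calc prob (fun ω => X ω ≤ m - t)
      ≤ prob (fun ω => -s * (m - t) ≤ -s * X ω) :=
        prob_mono fun ω hω => mul_le_mul_of_nonpos_left hω (by linarith)
    _ ≤ Real.exp (-(-s * (m - t))) * Real.exp (μ * (Real.exp (-s) - 1)) :=
        (prob_le_exp_neg_mul_expect_exp _ _).trans
          (mul_le_mul_of_nonneg_left (hX (-s)) (Real.exp_nonneg _))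
    _ ≤ Real.exp (-(t ^ 2 / (4 * M))) := by
        rw [← Real.exp_add, ← hst]
        exact Real.exp_le_exp.2 (by linarith)

variable [Fintype E] [DecidableEq E]

theorem prob_forall_mem [Nonempty Ω] (D : Finset E) (A : E → Finset Ω) :
    prob (fun ω : E → Ω => ∀ e ∈ D, ω e ∈ A e) = ∏ e ∈ D, (#(A e) : ℝ) / Fintype.card Ω := by
  classical
  have hpi : ({ω | ∀ e ∈ D, ω e ∈ A e} : Finset (E → Ω)) =
      Fintype.piFinset fun e => if e ∈ D then A e else univ := by
    ext ω
    simp only [mem_filter_univ, Fintype.mem_piFinset]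
    refine forall_congr' fun e => ?_
    split_ifs with h <;> simp [h]
  have hΩ : (Fintype.card Ω : ℝ) ≠ 0 := Nat.cast_ne_zero.2 Fintype.card_ne_zero
  have hcard : (Fintype.card (E → Ω) : ℝ) = ∏ _e : E, (Fintype.card Ω : ℝ) := by simp
  rw [prob, hcard]
  convert_to (#(Fintype.piFinset fun e => if e ∈ D then A e else univ) : ℝ) / _ = _
  · rw [← hpi]
    congr!
  rw [Fintype.card_piFinset, Nat.cast_prod, ← prod_div_distrib, ← Fintype.prod_ite_mem D]
  refine prod_congr rfl fun e _ => ?_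
  split_ifs
  · rfl
  · rw [card_univ, div_self hΩ]

variable [DecidableEq Ω]

-- Expanding `exp (s * X)` as a product over the events reduces the claim to the probabilities of
-- their intersections.
theorem hasPoissonMGF_card_forall_mem [Nonempty Ω] (I : Finset ι) {D : ι → Finset E}
    (hD : (I : Set ι).PairwiseDisjoint D) (A : E → Finset Ω) :
    HasPoissonMGF (fun ω : E → Ω => (#{j ∈ I | ∀ e ∈ D j, ω e ∈ A e} : ℝ))
      (∑ j ∈ I, ∏ e ∈ D j, (#(A e) : ℝ) / Fintype.card Ω) := by
  classical
  intro s
  set y := Real.exp s - 1 with hy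
  set P : ι → ℝ := fun j => ∏ e ∈ D j, (#(A e) : ℝ) / Fintype.card Ω with hP
  have hP0 (j) : 0 ≤ P j := prod_nonneg fun _ _ => by positivity
  have hP1 (j) : P j ≤ 1 := prod_le_one (fun _ _ => by positivity) fun e _ =>
    div_le_one_of_le₀ (Nat.cast_le.2 (card_le_univ _)) (Nat.cast_nonneg _)
  have hprod (ω : E → Ω) : Real.exp (s * #{j ∈ I | ∀ e ∈ D j, ω e ∈ A e}) =
      ∑ T ∈ I.powerset, y ^ #T * if ∀ e ∈ T.biUnion D, ω e ∈ A e then 1 else 0 := by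
    calc Real.exp (s * #{j ∈ I | ∀ e ∈ D j, ω e ∈ A e})
        = ∏ j ∈ I, (1 + y * if ∀ e ∈ D j, ω e ∈ A e then 1 else 0) := by
          rw [mul_comm, Real.exp_nat_mul, ← prod_const, prod_filter]
          refine prod_congr rfl fun j _ => ?_
          split_ifs <;> simp [hy]
      _ = _ := by
          rw [prod_one_add]
          refine sum_congr rfl fun T _ => ?_
          rw [prod_mul_distrib, prod_const, prod_boole]
          congr 3
          simp only [mem_biUnion, forall_exists_index, and_imp, eq_iff_iff]
          tauto
  have hinter : ∀ T ∈ I.powerset, 𝔼 ω : E → Ω,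
      (y ^ #T * if ∀ e ∈ T.biUnion D, ω e ∈ A e then 1 else 0) = ∏ j ∈ T, y * P j := by
    intro T hT
    rw [← mul_expect, expect_boole_eq_prob, prob_forall_mem, prod_mul_distrib, prod_const,
      prod_biUnion (hD.subset (mem_powerset.1 hT))]
  calc 𝔼 ω : E → Ω, Real.exp (s * #{j ∈ I | ∀ e ∈ D j, ω e ∈ A e})
      = ∏ j ∈ I, (1 + y * P j) := by
        rw [expect_congr rfl fun ω _ => hprod ω, expect_sum_comm, sum_congr rfl hinter,
          prod_one_add]
    _ ≤ ∏ j ∈ I, Real.exp (y * P j) := by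
        refine prod_le_prod (fun j _ => ?_) fun j _ => ?_
        · nlinarith [Real.exp_pos s, hP0 j, hP1 j]
        · rw [add_comm]
          exact Real.add_one_le_exp _
    _ = Real.exp ((∑ j ∈ I, P j) * y) := by
        rw [sum_mul, Real.exp_sum]
        exact prod_congr rfl fun j _ => by rw [mul_comm]

end PoissonTails

section BlockGraph

open Equiv

variable {V ι κ : Type*} [DecidableEq V]

/-- The bipartite graph between two families of blocks of positions, in which `X i` and `Y j` are
adjacent when the placement `σ` of the vertices puts an edge of `H` on `X i ∪ Y j`. -/
def blockGraph (H : Finset (Finset V)) (X : ι → Finset V) (Y : κ → Finset V) (σ : Perm V)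
    (i : ι) (j : κ) : Prop :=
  (X i ∪ Y j).image σ ∈ H

instance (H : Finset (Finset V)) (X : ι → Finset V) (Y : κ → Finset V) (σ : Perm V) :
    DecidableRel (blockGraph H X Y σ) := fun i j =>
  inferInstanceAs (Decidable ((X i ∪ Y j).image σ ∈ H))

theorem flip_blockGraph (H : Finset (Finset V)) (X : ι → Finset V) (Y : κ → Finset V)
    (σ : Perm V) : flip (blockGraph H X Y σ) = blockGraph H Y X σ := by
  funext j i
  simp only [flip, blockGraph, union_comm]

/-- In the `k`-uniform hypergraph `H` the degrees of `s`-sets are at least, and the codegrees of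
pairs of `s`-sets meeting in `c ∈ I` vertices at most, what they would be in a random hypergraph
of density `p`, up to a factor `1 ± η`. -/
structure NbhdRegular {n : ℕ} (H : Finset (Finset (Fin n))) (k s : ℕ) (I : Set ℕ) (η p : ℝ) :
    Prop where
  le_degree : ∀ S : Finset (Fin n), #S = s → (1 - η) * p * n.choose (k - s) ≤ hDeg n k H S
  codegree_le : ∀ S T : Finset (Fin n), #S = s → #T = s → #(S ∩ T) ∈ I →
    (#(hNbhd n k H S ∩ hNbhd n k H T) : ℝ) ≤ (1 + η) * p ^ 2 * n.choose (k - s)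

variable {n k s : ℕ} {H : Finset (Finset (Fin n))}

theorem mem_hNbhd {S Y : Finset (Fin n)} : Y ∈ hNbhd n k H S ↔ #Y = k - #S ∧ S ∪ Y ∈ H := by
  simp [hNbhd]

theorem image_mem_hNbhd_iff_blockGraph {X : ι → Finset (Fin n)} {Y : κ → Finset (Fin n)}
    (hX : ∀ i, #(X i) = s) (hY : ∀ j, #(Y j) = k - s) (σ : Perm (Fin n)) (i : ι) (j : κ) :
    (Y j).image σ ∈ hNbhd n k H ((X i).image σ) ↔ blockGraph H X Y σ i j := by
  rw [mem_hNbhd, card_image_of_injective _ σ.injective, card_image_of_injective _ σ.injective,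
    ← image_union, hX, hY, blockGraph]
  exact and_iff_right rfl

section RandomPlacement

variable [Fintype κ] {Y : κ → Finset (Fin n)} {c : ℕ} {τ : ℝ} {𝓕 : Finset (Finset (Fin n))}

theorem prob_card_image_mem_add_le (hn : 0 < n) (hY : ∀ j, #(Y j) = c)
    (hY2 : ∀ x, #{j | x ∈ Y j} ≤ 2) (h𝓕 : ∀ F ∈ 𝓕, #F = c) (hτ : 0 ≤ τ) :
    prob (fun σ : Perm (Fin n) => Fintype.card κ * #𝓕 / n.choose c + τ ≤
      (#{j | (Y j).image σ ∈ 𝓕} : ℝ)) ≤ Real.exp (-(τ ^ 2 / (32 * n))) := by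
  have htail := (swapLipschitz_card_image_mem hY2 𝓕).prob_expect_add_le hn (by norm_num) hτ
  rw [expect_card_image_mem hY h𝓕, Fintype.card_fin] at htail
  convert htail using 4
  push_cast
  ring

theorem prob_card_image_mem_le_sub (hn : 0 < n) (hY : ∀ j, #(Y j) = c)
    (hY2 : ∀ x, #{j | x ∈ Y j} ≤ 2) (h𝓕 : ∀ F ∈ 𝓕, #F = c) (hτ : 0 ≤ τ) :
    prob (fun σ : Perm (Fin n) => (#{j | (Y j).image σ ∈ 𝓕} : ℝ) ≤
      Fintype.card κ * #𝓕 / n.choose c - τ) ≤ Real.exp (-(τ ^ 2 / (32 * n))) := by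
  have htail := (swapLipschitz_card_image_mem hY2 𝓕).prob_le_expect_sub hn (by norm_num) hτ
  rw [expect_card_image_mem hY h𝓕, Fintype.card_fin] at htail
  convert htail using 4
  push_cast
  ring

theorem NbhdRegular.rowRegular_blockGraph {X : ι → Finset (Fin n)} {I : Set ℕ} {η p δ : ℝ}
    {σ : Perm (Fin n)} (hH : NbhdRegular H k s I η p) (hX : ∀ i, #(X i) = s)
    (hXI : ∀ i i', i ≠ i' → #(X i ∩ X i') ∈ I) (hY : ∀ j, #(Y j) = k - s) (hk : k - s ≤ n)
    (hp0 : 0 ≤ p) (hp1 : p ≤ 1) (hδ : 0 ≤ δ)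
    (hdeg : ∀ S, #S = s → (Fintype.card κ * hDeg n k H S / n.choose (k - s) : ℝ) -
      δ * p ^ 2 * Fintype.card κ ≤ #{j | (Y j).image σ ∈ hNbhd n k H S})
    (hcodeg : ∀ S T, #S = s → #T = s →
      (#{j | (Y j).image σ ∈ hNbhd n k H S ∩ hNbhd n k H T} : ℝ) ≤
        Fintype.card κ * #(hNbhd n k H S ∩ hNbhd n k H T) / n.choose (k - s) +
          δ * p ^ 2 * Fintype.card κ) :
    RowRegular (blockGraph H X Y σ) (η + δ) p := by
  have hch : (0 : ℝ) < n.choose (k - s) := Nat.cast_pos.2 (Nat.choose_pos hk)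
  have hXσ (i) : #((X i).image σ) = s := by rw [card_image_of_injective _ σ.injective, hX]
  have hcard (i) : #{j | (Y j).image σ ∈ hNbhd n k H ((X i).image σ)} =
      #{j | blockGraph H X Y σ i j} := by
    simp only [image_mem_hNbhd_iff_blockGraph hX hY]
  have hcard₂ (i i') : #{j | (Y j).image σ ∈
      hNbhd n k H ((X i).image σ) ∩ hNbhd n k H ((X i').image σ)} =
      #{j | blockGraph H X Y σ i j ∧ blockGraph H X Y σ i' j} := by
    simp only [mem_inter, image_mem_hNbhd_iff_blockGraph hX hY]
  constructor
  · intro i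
    have hmean : (1 - η) * p * Fintype.card κ ≤
        Fintype.card κ * hDeg n k H ((X i).image σ) / n.choose (k - s) := by
      rw [le_div_iff₀ hch, mul_right_comm, mul_comm]
      exact mul_le_mul_of_nonneg_left (hH.le_degree _ (hXσ i)) (Nat.cast_nonneg _)
    have hτ : δ * p ^ 2 * Fintype.card κ ≤ δ * p * Fintype.card κ := by
      gcongr
      nlinarith
    rw [← hcard]
    linarith [hdeg _ (hXσ i)]
  · intro i i' hii
    have hI : #((X i).image σ ∩ (X i').image σ) ∈ I := by
      rw [← image_inter _ _ σ.injective, card_image_of_injective _ σ.injective]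
      exact hXI i i' hii
    have hmean : Fintype.card κ * #(hNbhd n k H ((X i).image σ) ∩ hNbhd n k H ((X i').image σ)) /
        n.choose (k - s) ≤ (1 + η) * p ^ 2 * Fintype.card κ := by
      rw [div_le_iff₀ hch, mul_right_comm, mul_comm]
      exact mul_le_mul_of_nonneg_right (hH.codegree_le _ _ (hXσ i) (hXσ i') hI)
        (Nat.cast_nonneg _)
    rw [← hcard₂]
    linarith [hcodeg _ _ (hXσ i) (hXσ i')]

theorem NbhdRegular.prob_not_rowRegular_blockGraph_le {X : ι → Finset (Fin n)} {I : Set ℕ}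
    {η p δ : ℝ} (hH : NbhdRegular H k s I η p) (hX : ∀ i, #(X i) = s)
    (hXI : ∀ i i', i ≠ i' → #(X i ∩ X i') ∈ I) (hY : ∀ j, #(Y j) = k - s)
    (hY2 : ∀ x, #{j | x ∈ Y j} ≤ 2) (hn : 0 < n) (hk : k - s ≤ n) (hp0 : 0 ≤ p) (hp1 : p ≤ 1)
    (hδ : 0 ≤ δ) :
    prob (fun σ => ¬RowRegular (blockGraph H X Y σ) (η + δ) p) ≤
      (n.choose s + n.choose s ^ 2) *
        Real.exp (-((δ * p ^ 2 * Fintype.card κ) ^ 2 / (32 * n))) := by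
  set τ := δ * p ^ 2 * Fintype.card κ
  have hτ : 0 ≤ τ := by positivity
  set 𝒮 := powersetCard s (univ : Finset (Fin n)) with h𝒮
  have hcard𝒮 : #𝒮 = n.choose s := by rw [h𝒮, card_powersetCard, card_univ, Fintype.card_fin]
  have hmem {S} : S ∈ 𝒮 ↔ #S = s := by simp [h𝒮]
  have hnbhd {S} (hS : S ∈ 𝒮) : ∀ F ∈ hNbhd n k H S, #F = k - s := fun F hF => by
    rw [(mem_hNbhd.1 hF).1, hmem.1 hS]
  have hlow := prob_exists_le_card_mul fun S hS =>
    prob_card_image_mem_le_sub hn hY hY2 (hnbhd (S := S) hS) hτ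
  have hhigh := prob_exists_le_card_mul (s := 𝒮 ×ˢ 𝒮) fun P hP =>
    prob_card_image_mem_add_le (𝓕 := hNbhd n k H P.1 ∩ hNbhd n k H P.2) hn hY hY2
      (fun F hF => hnbhd (mem_product.1 hP).1 F (mem_inter.1 hF).1) hτ
  refine (prob_mono fun σ hσ => ?_).trans
    ((prob_or_le _ _).trans ((add_le_add hlow hhigh).trans_eq ?_))
  · contrapose! hσ
    obtain ⟨hdeg, hcodeg⟩ := hσ
    exact hH.rowRegular_blockGraph hX hXI hY hk hp0 hp1 hδ
      (fun S hS => (hdeg S (hmem.2 hS)).le)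
      fun S T hS hT => (hcodeg (S, T) (mem_product.2 ⟨hmem.2 hS, hmem.2 hT⟩)).le
  · rw [card_product, hcard𝒮]
    push_cast
    ring

end RandomPlacement

end BlockGraph

section RandomThinning

variable {α β E C : Type*}

/-- The subgraph of `G` formed by the pairs `x, y` whose label `e x y` has received under `ω` the
colour `col` prescribes for it. Prescribing different colours for a label in different graphs
makes their thinnings label-disjoint. -/
def thinned (G : α → β → Prop) (e : α → β → E) (col ω : E → C) (x : α) (y : β) : Prop :=
  G x y ∧ ω (e x y) = col (e x y)

instance [DecidableEq C] (G : α → β → Prop) [DecidableRel G] (e : α → β → E) (col ω : E → C) :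
    DecidableRel (thinned G e col ω) := fun x y =>
  inferInstanceAs (Decidable (G x y ∧ ω (e x y) = col (e x y)))

instance [DecidableEq C] (G : α → β → Prop) [DecidableRel (flip G)] (e : α → β → E)
    (col ω : E → C) : DecidableRel (flip (thinned G e col ω)) :=
  inferInstanceAs (DecidableRel (thinned (flip G) (flip e) col ω))

variable [Fintype E] [DecidableEq E] [Fintype C] [DecidableEq C] [Nonempty C]

theorem hasPoissonMGF_card_forall_eq {I : Finset β} {D : β → Finset E} {d : ℕ}
    (hD : (I : Set β).PairwiseDisjoint D) (hd : ∀ y ∈ I, #(D y) = d) (col : E → C) :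
    HasPoissonMGF (fun ω : E → C => (#{y ∈ I | ∀ f ∈ D y, ω f = col f} : ℝ))
      (#I / Fintype.card C ^ d) := by
  have hmgf := hasPoissonMGF_card_forall_mem I hD fun f => ({col f} : Finset C)
  simp only [mem_singleton, card_singleton, prod_const] at hmgf
  convert hmgf using 1
  rw [sum_congr rfl fun y hy => by rw [hd y hy], sum_const, nsmul_eq_mul, Nat.cast_one,
    one_div, inv_pow, div_eq_mul_inv]

variable [Fintype β] {G : α → β → Prop} [DecidableRel G] {e : α → β → E}

theorem hasPoissonMGF_degree_thinned (he : Function.Injective2 e) (col : E → C) (x : α) :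
    HasPoissonMGF (fun ω : E → C => (#{y | thinned G e col ω x y} : ℝ))
      (#{y | G x y} / Fintype.card C) := by
  have hmgf := hasPoissonMGF_card_forall_eq (I := {y | G x y}) (D := fun y => {e x y}) (d := 1)
    (fun y _ y' _ hy => disjoint_singleton.2 fun h => hy (he h).2) (fun _ _ => card_singleton _) col
  simp only [filter_filter, forall_eq, mem_singleton, pow_one] at hmgf
  convert hmgf
  rfl

theorem hasPoissonMGF_codegree_thinned (he : Function.Injective2 e) (col : E → C) {x x' : α}
    (hx : x ≠ x') :
    HasPoissonMGF
      (fun ω : E → C => (#{y | thinned G e col ω x y ∧ thinned G e col ω x' y} : ℝ))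
      (#{y | G x y ∧ G x' y} / Fintype.card C ^ 2) := by
  have hmgf := hasPoissonMGF_card_forall_eq (I := {y | G x y ∧ G x' y})
    (D := fun y => {e x y, e x' y}) (d := 2)
    (fun y _ y' _ hy => disjoint_left.2 fun f hf hf' => by
      simp only [mem_insert, mem_singleton] at hf hf'
      rcases hf with rfl | rfl <;> rcases hf' with h | h <;> exact hy (he h).2)
    (fun _ _ => card_pair fun h => hx (he h).1) col
  simpa only [filter_filter, forall_eq_or_imp, forall_eq, mem_insert, mem_singleton, thinned,
    and_and_and_comm] using hmgf

theorem RowRegular.prob_degree_thinned_le {η p δ : ℝ} (hG : RowRegular G η p)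
    (he : Function.Injective2 e) (col : E → C) (x : α) (hη : 0 ≤ η) (hp0 : 0 < p) (hp1 : p ≤ 1)
    (hδ0 : 0 ≤ δ) (hδ1 : δ ≤ 1) (hβ : 0 < Fintype.card β) :
    prob (fun ω : E → C => (#{y | thinned G e col ω x y} : ℝ) ≤
      (1 - (η + δ)) * (p / Fintype.card C) * Fintype.card β) ≤
        Real.exp (-(δ ^ 2 * (p / Fintype.card C) ^ 2 * Fintype.card β / 8)) := by
  set Λ : ℝ := (Fintype.card C : ℝ)
  set ν : ℝ := (Fintype.card β : ℝ)
  have hΛ : 1 ≤ Λ := Nat.one_le_cast.2 Fintype.card_pos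
  have hν : 0 < ν := Nat.cast_pos.2 hβ
  set q := p / Λ with hq
  have hq0 : 0 < q := by positivity
  have hq1 : q ≤ 1 := div_le_one_of_le₀ (hp1.trans hΛ) (by positivity)
  have hqν : 0 < q * ν := by positivity
  have hmean : (1 - η) * q * ν ≤ #{y | G x y} / Λ := by
    rw [le_div_iff₀ (by positivity)]
    have hdeg : (1 - η) * p * ν ≤ #{y | G x y} := hG.le_degree x
    refine hdeg.trans_eq' ?_
    rw [hq]
    field_simp
  have htail := (hasPoissonMGF_degree_thinned he col x).prob_le_sub hmean (M := 2 * (q * ν))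
    (t := δ * (q * ν)) (by nlinarith) (by positivity) (by positivity) (by nlinarith)
    (by positivity)
  refine (prob_mono fun ω hω => hω.trans_eq (by ring)).trans (htail.trans (Real.exp_le_exp.2 ?_))
  have hexp : (δ * (q * ν)) ^ 2 / (4 * (2 * (q * ν))) = δ ^ 2 * q * ν / 8 := by
    field_simp
    ring
  rw [hexp, neg_le_neg_iff]
  gcongr
  nlinarith

theorem RowRegular.prob_le_codegree_thinned {η p δ : ℝ} (hG : RowRegular G η p)
    (he : Function.Injective2 e) (col : E → C) {x x' : α} (hx : x ≠ x') (hη0 : 0 ≤ η)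
    (hη1 : η ≤ 1) (hp : 0 < p) (hδ0 : 0 ≤ δ) (hδ1 : δ ≤ 1) (hβ : 0 < Fintype.card β) :
    prob (fun ω : E → C => (1 + (η + δ)) * (p / Fintype.card C) ^ 2 * Fintype.card β ≤
      (#{y | thinned G e col ω x y ∧ thinned G e col ω x' y} : ℝ)) ≤
        Real.exp (-(δ ^ 2 * (p / Fintype.card C) ^ 2 * Fintype.card β / 8)) := by
  set Λ : ℝ := (Fintype.card C : ℝ)
  set ν : ℝ := (Fintype.card β : ℝ)
  have hΛ : 0 < Λ := Nat.cast_pos.2 Fintype.card_pos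
  have hν : 0 < ν := Nat.cast_pos.2 hβ
  set q := p / Λ with hq
  have hqν : 0 < q ^ 2 * ν := by positivity
  have hmean : #{y | G x y ∧ G x' y} / Λ ^ 2 ≤ (1 + η) * q ^ 2 * ν := by
    rw [div_le_iff₀ (by positivity)]
    have hcodeg : #{y | G x y ∧ G x' y} ≤ (1 + η) * p ^ 2 * ν := hG.codegree_le x x' hx
    refine hcodeg.trans_eq ?_
    rw [hq]
    field_simp
  have htail := (hasPoissonMGF_codegree_thinned he col hx).prob_add_le hmean
    (M := 2 * (q ^ 2 * ν)) (t := δ * (q ^ 2 * ν)) (by positivity) (by nlinarith) (by positivity)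
    (by positivity) (by nlinarith)
  refine (prob_mono fun ω hω => hω.trans_eq' (by ring)).trans (htail.trans_eq ?_)
  congr 2
  field_simp
  ring

theorem RowRegular.prob_not_thinned_le [Fintype α] {η p δ : ℝ} (hG : RowRegular G η p)
    (he : Function.Injective2 e) (col : E → C) (hη0 : 0 ≤ η) (hη1 : η ≤ 1) (hp0 : 0 < p)
    (hp1 : p ≤ 1) (hδ0 : 0 ≤ δ) (hδ1 : δ ≤ 1) (hβ : 0 < Fintype.card β) :
    prob (fun ω : E → C => ¬RowRegular (thinned G e col ω) (η + δ) (p / Fintype.card C)) ≤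
      Fintype.card α ^ 2 *
        Real.exp (-(δ ^ 2 * (p / Fintype.card C) ^ 2 * Fintype.card β / 8)) := by
  classical
  have hlow := prob_exists_le_card_mul (s := univ) fun x _ =>
    hG.prob_degree_thinned_le he col x hη0 hp0 hp1 hδ0 hδ1 hβ
  have hhigh := prob_exists_le_card_mul (s := offDiag univ) fun P hP =>
    hG.prob_le_codegree_thinned he col (mem_offDiag.1 hP).2.2 hη0 hη1 hp0 hδ0 hδ1 hβ
  refine (prob_mono fun ω hω => ?_).trans
    ((prob_or_le _ _).trans ((add_le_add hlow hhigh).trans_eq ?_))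
  · contrapose! hω
    exact ⟨fun x => (hω.1 x (mem_univ x)).le,
      fun x x' hx => (hω.2 (x, x') (mem_offDiag.2 ⟨mem_univ _, mem_univ _, hx⟩)).le⟩
  · rw [offDiag_card, card_univ, Nat.cast_sub (Nat.le_mul_self _)]
    push_cast
    ring

end RandomThinning

section LabelDisjointMatchings

theorem exists_forall_card_filter_le {Ω ι E : Type*} [Fintype Ω] [Nonempty Ω] [Fintype ι]
    {ℰ : Finset E} {A : E → Ω → Prop} [∀ e, DecidablePred (A e)] {Λ : ℕ} {θ ρ : ℝ} (hθ0 : 0 ≤ θ)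
    (hθ1 : θ ≤ 1) (hΛ : 0 < Λ) (hA : ∀ e ∈ ℰ, prob (A e) ≤ ρ)
    (hρ : Fintype.card ι * ρ ≤ (1 - θ) * Λ) (hℰ : #ℰ * Real.exp (-(θ ^ 2 * Λ / 4)) < 1) :
    ∃ σ : ι → Ω, ∀ e ∈ ℰ, #{t | A e (σ t)} ≤ Λ := by
  classical
  have htail (e) (he : e ∈ ℰ) :
      prob (fun σ : ι → Ω => (Λ : ℝ) ≤ #{t | A e (σ t)}) ≤ Real.exp (-(θ ^ 2 * Λ / 4)) := by
    have hmgf := hasPoissonMGF_card_forall_mem (univ : Finset ι) (D := fun t => {t})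
      (fun t _ t' _ h => disjoint_singleton.2 h) fun _ => ({g | A e g} : Finset Ω)
    simp only [mem_singleton, forall_eq, mem_filter_univ, prod_singleton, sum_const,
      nsmul_eq_mul, card_univ] at hmgf
    have hmean : Fintype.card ι * (#{g | A e g} / Fintype.card Ω : ℝ) ≤ (1 - θ) * Λ := by
      refine hρ.trans' (mul_le_mul_of_nonneg_left ((hA e he).trans' (le_of_eq ?_))
        (Nat.cast_nonneg _))
      rw [prob]
      congr!
    have hΛ' : (0 : ℝ) < Λ := Nat.cast_pos.2 hΛ
    have hbound := hmgf.prob_add_le hmean (M := Λ) (t := θ * Λ) (by nlinarith) (by nlinarith)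
      hΛ' (by positivity) (by nlinarith)
    have hexp : (θ * Λ) ^ 2 / (4 * Λ) = θ ^ 2 * Λ / 4 := by field_simp
    rw [hexp] at hbound
    exact (prob_mono fun σ hσ => by linarith).trans hbound
  obtain ⟨σ, hσ⟩ := exists_not_of_prob_lt_one ((prob_exists_le_card_mul htail).trans_lt hℰ)
  push Not at hσ
  exact ⟨σ, fun e he => (Nat.cast_lt.1 (hσ e he)).le⟩

theorem exists_injOn_of_card_le {ι C : Type*} [Fintype C] [Nonempty C] {T : Finset ι}
    (hT : #T ≤ Fintype.card C) : ∃ c : ι → C, Set.InjOn c T := by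
  obtain ⟨f⟩ : Nonempty (T ↪ C) := by
    rwa [Function.Embedding.nonempty_iff_card_le, Fintype.card_coe]
  exact Set.exists_injOn_iff_injective.2 ⟨f, f.injective⟩

variable {ι α β E C : Type*} [Fintype ι] [Fintype α] [Fintype β] [Finite E] [Fintype C]
  [Nonempty C] {G : ι → α → β → Prop} [∀ t, DecidableRel (G t)]
  [∀ t, DecidableRel (flip (G t))] {e : ι → α → β → E} {η p δ : ℝ}

theorem exists_rowRegular_thinned [DecidableEq C] (hαβ : Fintype.card α = Fintype.card β)
    (hG : ∀ t, RowRegular (G t) η p) (hG' : ∀ t, RowRegular (flip (G t)) η p)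
    (he : ∀ t, Function.Injective2 (e t)) (col : ι → E → C) (hη0 : 0 ≤ η) (hη1 : η ≤ 1)
    (hp0 : 0 < p) (hp1 : p ≤ 1) (hδ0 : 0 ≤ δ) (hδ1 : δ ≤ 1) (hβ : 0 < Fintype.card β)
    (hsmall : 2 * (Fintype.card ι * Fintype.card β ^ 2) *
      Real.exp (-(δ ^ 2 * (p / Fintype.card C) ^ 2 * Fintype.card β / 8)) < 1) :
    ∃ ω : E → C, ∀ t, RowRegular (thinned (G t) (e t) (col t) ω) (η + δ) (p / Fintype.card C) ∧
      RowRegular (flip (thinned (G t) (e t) (col t) ω)) (η + δ) (p / Fintype.card C) := by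
  classical
  cases nonempty_fintype E
  have hrow := prob_exists_le_card_mul (s := univ) fun t _ =>
    (hG t).prob_not_thinned_le (he t) (col t) hη0 hη1 hp0 hp1 hδ0 hδ1 hβ
  have hcol := prob_exists_le_card_mul (s := univ) fun t _ =>
    (hG' t).prob_not_thinned_le (e := flip (e t)) (fun _ _ _ _ h => (he t h).symm) (col t)
      hη0 hη1 hp0 hp1 hδ0 hδ1 (hαβ ▸ hβ)
  obtain ⟨ω, hω⟩ := exists_not_of_prob_lt_one
    ((prob_or_le _ _).trans_lt ((add_le_add hrow hcol).trans_lt (by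
      rw [hαβ, card_univ]; exact hsmall.trans_eq' (by ring))))
  push Not at hω
  exact ⟨ω, fun t => ⟨hω.1 t (mem_univ t), hω.2 t (mem_univ t)⟩⟩

theorem exists_labelDisjoint_perfectMatchings {u : ℝ} {Λ r : ℕ} [NeZero Λ] [DecidableEq E]
    (hαβ : Fintype.card α = Fintype.card β) (hG : ∀ t, RowRegular (G t) η p)
    (hG' : ∀ t, RowRegular (flip (G t)) η p)
    (he : ∀ t, Function.Injective2 (e t)) (heΛ : ∀ f, #{t | ∃ x y, e t x y = f} ≤ Λ) (hη : 0 ≤ η)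
    (hp0 : 0 < p) (hp1 : p ≤ 1) (hδ : 0 ≤ δ) (hβ : 0 < Fintype.card β)
    (hsmall : 2 * (Fintype.card ι * Fintype.card β ^ 2) *
      Real.exp (-(δ ^ 2 * (p / Λ) ^ 2 * Fintype.card β / 8)) < 1)
    (hηu : η + δ ≤ 1.01 * u ^ 3) (hu : 0 < u) (hu2 : u ≤ 1 / 2)
    (hbig : 1 ≤ 0.07 * u ^ 4 * (p / Λ) ^ 2 * Fintype.card β)
    (hr : r ≤ (1 - 1.9 * u) * (p / Λ) * Fintype.card β) :
    ∃ π : ι → Fin r → α ≃ β, (∀ t s x, G t x (π t s x)) ∧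
      ∀ t s x t' s' x', e t x (π t s x) = e t' x' (π t' s' x') → t = t' ∧ s = s' := by
  classical
  choose c hc using fun f =>
    exists_injOn_of_card_le (C := Fin Λ) ((heΛ f).trans_eq (Fintype.card_fin Λ).symm)
  set col : ι → E → Fin Λ := fun t f => c f t with hcol
  have hu3 : u ^ 3 ≤ 1 / 8 := (pow_le_pow_left₀ hu.le hu2 3).trans_eq (by norm_num)
  obtain ⟨ω, hω⟩ := exists_rowRegular_thinned hαβ hG hG' he col hη (by linarith) hp0 hp1 hδ
    (by linarith) hβ (by rwa [Fintype.card_fin])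
  simp only [Fintype.card_fin] at hω
  choose π hπ hinj using fun t => RowRegular.exists_disjoint_perfectMatchings hαβ (hω t).1 (hω t).2
    (by linarith) hηu (div_pos hp0 (Nat.cast_pos.2 (NeZero.pos Λ))) hu hu2 hbig hr
  refine ⟨π, fun t s x => (hπ t s x).1, fun t s x t' s' x' h => ?_⟩
  have htt : t = t' := hc (e t x (π t s x)) (mem_filter_univ _ |>.2 ⟨x, _, rfl⟩)
    (mem_filter_univ _ |>.2 ⟨x', _, h.symm⟩) (by
      have := (hπ t s x).2.symm.trans ((congrArg ω h).trans (hπ t' s' x').2)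
      simpa only [hcol, h] using this)
  subst htt
  obtain ⟨rfl, hs⟩ := he t h
  exact ⟨rfl, hinj t x hs⟩

end LabelDisjointMatchings

section RandomPlacements

open Equiv

variable {n ν a b : ℕ} {H : Finset (Finset (Fin n))} {η δ p : ℝ}

/-- Left blocks `X i` of `2 * a` positions and right blocks `Y j` of `b` positions, such that the
unions `X i ∪ Y j` are distinct. Distinct right blocks are disjoint, while distinct left blocks
may share half of their positions. -/
structure IsBlockSystem (a b : ℕ) (X Y : Fin ν → Finset (Fin n)) : Prop where
  card_left : ∀ i, #(X i) = 2 * a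
  card_right : ∀ j, #(Y j) = b
  card_left_inter : ∀ i i', i ≠ i' → #(X i ∩ X i') ∈ ({0, a} : Set ℕ)
  disjoint_right : ∀ j j', j ≠ j' → Disjoint (Y j) (Y j')
  disjoint : ∀ i j, Disjoint (X i) (Y j)
  card_mem_left_le : ∀ x, #{i | x ∈ X i} ≤ 2
  injective_union : Function.Injective2 fun i j => X i ∪ Y j

/-- The placements `σ` for which the block graph between left and right blocks is regular from
both sides. -/
def RegularPlacement (H : Finset (Finset (Fin n))) (X Y : Fin ν → Finset (Fin n)) (η p : ℝ)
    (σ : Perm (Fin n)) : Prop :=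
  RowRegular (blockGraph H X Y σ) η p ∧ RowRegular (blockGraph H Y X σ) η p

namespace IsBlockSystem

variable {X Y : Fin ν → Finset (Fin n)} (hXY : IsBlockSystem a b X Y)
include hXY

theorem card_mem_right_le (x : Fin n) : #{j | x ∈ Y j} ≤ 2 := by
  refine (card_le_one.2 fun j hj j' hj' => ?_).trans one_le_two
  by_contra hne
  exact disjoint_left.1 (hXY.disjoint_right j j' hne) ((mem_filter_univ j).1 hj)
    ((mem_filter_univ j').1 hj')

theorem card_union (i j : Fin ν) : #(X i ∪ Y j) = 2 * a + b := by
  rw [card_union_of_disjoint (hXY.disjoint i j), hXY.card_left, hXY.card_right]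

theorem sq_le_choose : ν ^ 2 ≤ n.choose (2 * a + b) := by
  have hcard := card_le_card_of_injOn (s := (univ : Finset (Fin ν × Fin ν)))
    (t := powersetCard (2 * a + b) univ) (fun z => X z.1 ∪ Y z.2)
    (fun z _ => mem_powersetCard.2 ⟨subset_univ _, hXY.card_union z.1 z.2⟩)
    hXY.injective_union.uncurry.injOn
  simpa [sq] using hcard

theorem prob_not_regularPlacement_le (hA : NbhdRegular H (2 * a + b) (2 * a) {0, a} η p)
    (hB : NbhdRegular H (2 * a + b) b {0} η p) (hn : 0 < n) (hk : 2 * a + b ≤ n) (hp0 : 0 ≤ p)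
    (hp1 : p ≤ 1) (hδ : 0 ≤ δ) :
    prob (fun σ => ¬RegularPlacement H X Y (η + δ) p σ) ≤
      4 * n ^ (2 * (2 * a + b)) * Real.exp (-((δ * p ^ 2 * ν) ^ 2 / (32 * n))) := by
  have hleft := hA.prob_not_rowRegular_blockGraph_le (Y := Y) hXY.card_left hXY.card_left_inter
    (fun j => (hXY.card_right j).trans (by lia)) hXY.card_mem_right_le hn (by lia) hp0 hp1 hδ
  have hright := hB.prob_not_rowRegular_blockGraph_le (Y := X) hXY.card_right
    (fun j j' h => card_eq_zero.2 (disjoint_iff_inter_eq_empty.1 (hXY.disjoint_right j j' h)))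
    (fun i => (hXY.card_left i).trans (by lia)) hXY.card_mem_left_le hn (by lia) hp0 hp1 hδ
  rw [Fintype.card_fin] at hleft hright
  have hn1 : (1 : ℝ) ≤ n := Nat.one_le_cast.2 hn
  have hchoose {s : ℕ} (hs : s ≤ 2 * a + b) :
      (n.choose s + n.choose s ^ 2 : ℝ) ≤ 2 * n ^ (2 * (2 * a + b)) := by
    have hpow : (n.choose s : ℝ) ≤ n ^ (2 * a + b) :=
      (Nat.cast_le.2 (Nat.choose_le_pow n s)).trans
        (by push_cast; exact pow_le_pow_right₀ hn1 hs)
    rw [mul_comm 2 (2 * a + b), pow_mul]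
    nlinarith [one_le_pow₀ hn1 (n := 2 * a + b), Nat.cast_nonneg (α := ℝ) (n.choose s)]
  have hmono {s : ℕ} (hs : s ≤ 2 * a + b) := mul_le_mul_of_nonneg_right (hchoose hs)
    (Real.exp_pos (-((δ * p ^ 2 * ν) ^ 2 / (32 * n)))).le
  refine (prob_mono fun σ hσ => ?_).trans ((prob_or_le _ _).trans ((add_le_add
    (hleft.trans (hmono (by lia))) (hright.trans (hmono (by lia)))).trans_eq (by ring)))
  exact not_and_or.1 hσ

theorem prob_exists_image_union_eq_le {e : Finset (Fin n)} (he : #e = 2 * a + b) :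
    prob (fun σ : Perm (Fin n) => ∃ i j, (X i ∪ Y j).image σ = e) ≤
      ν ^ 2 / n.choose (2 * a + b) := by
  have hone := prob_exists_le_card_mul (s := (univ : Finset (Fin ν × Fin ν)))
    (P := fun z (σ : Perm (Fin n)) => (X z.1 ∪ Y z.2).image σ = e) fun z _ =>
    (prob_image_eq (hXY.card_union z.1 z.2) he).le
  rw [Fintype.card_fin, card_univ, Fintype.card_prod, Fintype.card_fin] at hone
  refine (prob_mono fun σ ⟨i, j, h⟩ => ⟨(i, j), mem_univ _, h⟩).trans (hone.trans_eq ?_)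
  push_cast
  ring

theorem exists_regularPlacements {N Λ : ℕ} {θ ζ : ℝ}
    (hbad : prob (fun σ => ¬RegularPlacement H X Y η p σ) ≤ ζ) (hζ : ζ < 1) (hθ0 : 0 ≤ θ)
    (hθ1 : θ ≤ 1) (hΛ : 0 < Λ)
    (hN : N * (ν ^ 2 / n.choose (2 * a + b)) ≤ (1 - θ) * (1 - ζ) * Λ)
    (htail : n.choose (2 * a + b) * Real.exp (-(θ ^ 2 * Λ / 4)) < 1) :
    ∃ σ : Fin N → Perm (Fin n), (∀ t, RegularPlacement H X Y η p (σ t)) ∧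
      ∀ e, #{t | ∃ i j, (X i ∪ Y j).image (σ t) = e} ≤ Λ := by
  classical
  have hgood : 1 - ζ ≤ prob (RegularPlacement H X Y η p) := by
    rw [prob_not] at hbad
    linarith
  have : Nonempty {σ // RegularPlacement H X Y η p σ} := by
    obtain ⟨σ, hσ⟩ := exists_not_of_prob_lt_one (hbad.trans_lt hζ)
    exact ⟨σ, not_not.1 hσ⟩
  set hits := fun (e : Finset (Fin n)) (σ : Perm (Fin n)) => ∃ i j, (X i ∪ Y j).image σ = e
  have hhit (e) (he : e ∈ powersetCard (2 * a + b) univ) :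
      prob (fun σ : {σ // RegularPlacement H X Y η p σ} => hits e σ) ≤
        ν ^ 2 / n.choose (2 * a + b) / (1 - ζ) :=
    (prob_subtype_le (P := hits e)).trans (div_le_div₀ (by positivity)
      (hXY.prob_exists_image_union_eq_le (mem_powersetCard.1 he).2) (by linarith) hgood)
  obtain ⟨σ, hσ⟩ := exists_forall_card_filter_le (ι := Fin N) hθ0 hθ1 hΛ hhit
    (by
      rw [Fintype.card_fin, ← mul_div_assoc, div_le_iff₀ (by linarith)]
      linarith)
    (by rwa [card_powersetCard, card_univ, Fintype.card_fin])
  refine ⟨fun t => σ t, fun t => (σ t).2, fun e => ?_⟩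
  by_cases he : #e = 2 * a + b
  · exact hσ e (mem_powersetCard.2 ⟨subset_univ _, he⟩)
  · have hunhit (t) : ¬∃ i j, (X i ∪ Y j).image (σ t).1 = e := fun ⟨i, j, h⟩ =>
      he (by rw [← h, card_image_of_injective _ (σ t).1.injective, hXY.card_union])
    rw [filter_false_of_mem fun t _ => hunhit t, card_empty]
    exact Nat.zero_le Λ

end IsBlockSystem

end RandomPlacements

section Grid

open Equiv

variable {a b ν : ℕ}

/-- The positions `0, …, (a + b) * ν - 1` of the cyclic ordering arranged in `ν` rows of `a` left
and `b` right columns, row after row. -/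
def grid (a b ν : ℕ) : Fin ν × (Fin a ⊕ Fin b) ≃ Fin ((a + b) * ν) :=
  ((Equiv.refl (Fin ν)).prodCongr finSumFinEquiv).trans
    (finProdFinEquiv.trans (finCongr (Nat.mul_comm ν (a + b))))

theorem grid_natCast [NeZero ν] [NeZero ((a + b) * ν)] (m : ℕ) (c : Fin a ⊕ Fin b) :
    grid a b ν (Fin.ofNat ν m, c) =
      Fin.ofNat ((a + b) * ν) (m * (a + b) + (finSumFinEquiv c : Fin (a + b))) := by
  have hc := (finSumFinEquiv c : Fin (a + b)).isLt
  ext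
  simp only [grid, trans_apply, prodCongr_apply, Prod.map, coe_refl, id, finCongr_apply,
    Fin.val_cast, finProdFinEquiv_apply_val, Fin.val_ofNat]
  rw [Nat.mod_mul, mul_comm m, Nat.mul_add_mod, Nat.mod_eq_of_lt hc,
    Nat.mul_add_div (Nat.zero_lt_of_lt hc), Nat.div_eq_of_lt hc, add_zero]

/-- The positions of the grid in the rows `R` and the columns `S`. -/
def cells (R : Finset (Fin ν)) (S : Finset (Fin a ⊕ Fin b)) : Finset (Fin ((a + b) * ν)) :=
  (R ×ˢ S).map (grid a b ν).toEmbedding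

variable {R R' : Finset (Fin ν)} {S S' : Finset (Fin a ⊕ Fin b)}

theorem grid_mem_cells {x : Fin ν} {c : Fin a ⊕ Fin b} :
    grid a b ν (x, c) ∈ cells R S ↔ x ∈ R ∧ c ∈ S := by
  rw [cells, ← Equiv.coe_toEmbedding, Finset.mem_map', mem_product]

theorem card_cells : #(cells R S) = #R * #S := by
  rw [cells, card_map, card_product]

theorem cells_inter : cells R S ∩ cells R' S = cells (R ∩ R') S := by
  rw [cells, cells, cells, ← map_inter, inter_product]

theorem disjoint_cells : Disjoint (cells R S) (cells R' S') ↔ Disjoint R R' ∨ Disjoint S S' := by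
  rw [cells, cells, Finset.disjoint_map, disjoint_product]

section Blocks

variable [NeZero ν]

/-- The left block of the grid at `i`: the left columns of the cyclically consecutive rows `i` and
`i + 1`. -/
def leftBlock (a b : ℕ) (i : Fin ν) : Finset (Fin ((a + b) * ν)) :=
  cells {i, i + 1} (univ.map .inl)

/-- The right block of the grid at `j`: the right columns of row `j`. -/
def rightBlock (a b : ℕ) (j : Fin ν) : Finset (Fin ((a + b) * ν)) :=
  cells {j} (univ.map .inr)

theorem card_pair_add_one (hν : 3 ≤ ν) (i : Fin ν) : #{i, i + 1} = 2 :=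
  card_pair (by simpa using by lia)

theorem pair_add_one_injective (hν : 3 ≤ ν) :
    Function.Injective fun i : Fin ν => ({i, i + 1} : Finset (Fin ν)) := fun i i' h => by
  have h : ({i, i + 1} : Finset (Fin ν)) = {i', i' + 1} := h
  have htwo : (1 + 1 : Fin ν) ≠ 0 := by
    rw [Ne, Fin.ext_iff, Fin.val_add, Fin.val_one', Nat.mod_eq_of_lt (by lia : 1 < ν),
      Nat.mod_eq_of_lt (by lia)]
    simp
  have hi : i ∈ ({i', i' + 1} : Finset (Fin ν)) := h ▸ mem_insert_self i _
  have hi' : i' ∈ ({i, i + 1} : Finset (Fin ν)) := h.symm ▸ mem_insert_self i' _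
  simp only [mem_insert, mem_singleton] at hi hi'
  rcases hi with hi | hi
  · exact hi
  · rcases hi' with hi' | hi'
    · exact hi'.symm
    · rw [hi', add_assoc] at hi
      exact absurd (left_eq_add.1 hi) htwo

theorem card_pair_add_one_inter_le (hν : 3 ≤ ν) {i i' : Fin ν} (h : i ≠ i') :
    #(({i, i + 1} : Finset (Fin ν)) ∩ {i', i' + 1}) ≤ 1 := by
  by_contra! hlt
  refine h (pair_add_one_injective hν ?_)
  have hi := eq_of_subset_of_card_le inter_subset_left ((card_pair_add_one hν i).trans_le hlt)
  have hi' := eq_of_subset_of_card_le inter_subset_right ((card_pair_add_one hν i').trans_le hlt)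
  exact hi.symm.trans hi'

theorem isBlockSystem_leftBlock_rightBlock (hν : 3 ≤ ν) (ha : 0 < a) (hb : 0 < b) :
    IsBlockSystem a b (leftBlock a b (ν := ν)) (rightBlock a b) where
  card_left i := by
    rw [leftBlock, card_cells, card_pair_add_one hν, card_map, card_univ, Fintype.card_fin]
  card_right j := by
    rw [rightBlock, card_cells, card_singleton, card_map, card_univ, Fintype.card_fin, one_mul]
  card_left_inter i i' h := by
    rw [leftBlock, leftBlock, cells_inter, card_cells, card_map, card_univ, Fintype.card_fin]
    have := card_pair_add_one_inter_le hν h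
    interval_cases #(({i, i + 1} : Finset (Fin ν)) ∩ {i', i' + 1}) <;> simp
  disjoint_right j j' h := disjoint_cells.2 (.inl (disjoint_singleton.2 h))
  disjoint i j := disjoint_cells.2 (.inr (disjoint_map_inl_map_inr _ _))
  card_mem_left_le x := by
    obtain ⟨⟨y, c⟩, rfl⟩ := (grid a b ν).surjective x
    refine (card_le_card (t := {y, y - 1}) fun i hi => ?_).trans card_le_two
    rw [mem_filter_univ, leftBlock, grid_mem_cells, mem_insert, mem_singleton] at hi
    rw [mem_insert, mem_singleton, eq_sub_iff_add_eq]
    exact hi.1.imp Eq.symm Eq.symm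
  injective_union i i' j j' h := by
    have hmem (z : Fin ν × (Fin a ⊕ Fin b)) := Finset.ext_iff.1 h (grid a b ν z)
    simp only [mem_union, leftBlock, rightBlock, Prod.forall, grid_mem_cells] at hmem
    refine ⟨pair_add_one_injective hν (Finset.ext fun x => ?_), ?_⟩
    · simpa using hmem x (.inl ⟨0, ha⟩)
    · simpa using hmem j (.inr ⟨0, hb⟩)

end Blocks

end Grid

section HamiltonCycles

open Equiv

variable {a b ν : ℕ}

/-- The permutation of the positions that moves each right column along `π` and fixes the left
columns. -/
def shear (a b : ℕ) (π : Perm (Fin ν)) : Perm (Fin ((a + b) * ν)) :=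
  (grid a b ν).permCongr (prodCongrLeft (Sum.elim (fun _ => 1) fun _ => π))

theorem shear_grid (π : Perm (Fin ν)) (x : Fin ν) (c : Fin a ⊕ Fin b) :
    shear a b π (grid a b ν (x, c)) =
      grid a b ν ((Sum.elim (fun _ => 1) (fun _ => π) c : Perm (Fin ν)) x, c) := by
  simp [shear, permCongr_apply]

theorem mem_rightBlock {j x : Fin ν} {c : Fin a ⊕ Fin b} :
    grid a b ν (x, c) ∈ rightBlock a b j ↔ x = j ∧ ∃ r, .inr r = c := by
  simp [rightBlock, grid_mem_cells]

theorem image_shear_rightBlock (π : Perm (Fin ν)) (j : Fin ν) :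
    (rightBlock a b j).image (shear a b π) = rightBlock a b (π j) := by
  refine eq_of_subset_of_card_le (image_subset_iff.2 fun y hy => ?_) ?_
  · obtain ⟨⟨x, c⟩, rfl⟩ := (grid a b ν).surjective y
    obtain ⟨rfl, r, rfl⟩ := mem_rightBlock.1 hy
    rw [shear_grid]
    exact mem_rightBlock.2 ⟨rfl, r, rfl⟩
  · rw [card_image_of_injective _ (shear a b π).injective, rightBlock, rightBlock, card_cells,
      card_cells, card_singleton, card_singleton]

variable [NeZero ν]

theorem mem_leftBlock {i x : Fin ν} {c : Fin a ⊕ Fin b} :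
    grid a b ν (x, c) ∈ leftBlock a b i ↔ (x = i ∨ x = i + 1) ∧ ∃ r, .inl r = c := by
  simp [leftBlock, grid_mem_cells]

theorem leftBlock_union_rightBlock [NeZero ((a + b) * ν)]
    (hXY : IsBlockSystem a b (leftBlock a b (ν := ν)) (rightBlock a b)) (i : Fin ν) :
    leftBlock a b i ∪ rightBlock a b i =
      (range (2 * a + b)).image fun j => Fin.ofNat ((a + b) * ν) (i * (a + b) + j) := by
  have hrow : i = Fin.ofNat ν i := (Fin.ofNat_val_eq_self i).symm
  have hrow' : i + 1 = Fin.ofNat ν (i + 1) := by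
    ext
    simp [Fin.val_add]
  refine eq_of_subset_of_card_le (fun y hy => ?_)
    (card_image_le.trans_eq ((card_range _).trans (hXY.card_union i i).symm))
  obtain ⟨⟨x, c⟩, rfl⟩ := (grid a b ν).surjective y
  rw [mem_union, mem_leftBlock, mem_rightBlock] at hy
  rw [mem_image]
  rcases hy with ⟨rfl | rfl, r, rfl⟩ | ⟨rfl, r, rfl⟩
  · refine ⟨r, mem_range.2 (by lia), ?_⟩
    conv_rhs => rw [hrow, grid_natCast]
    simp
  · refine ⟨a + b + r, mem_range.2 (by lia), ?_⟩
    rw [hrow', grid_natCast, finSumFinEquiv_apply_left, Fin.val_castAdd]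
    congr 1
    ring
  · refine ⟨a + r, mem_range.2 (by lia), ?_⟩
    conv_rhs => rw [hrow, grid_natCast]
    simp

theorem image_shear_leftBlock (π : Perm (Fin ν)) (i : Fin ν) :
    (leftBlock a b i).image (shear a b π) = leftBlock a b i := by
  refine eq_of_subset_of_card_le (image_subset_iff.2 fun y hy => ?_)
    (card_image_of_injective _ (shear a b π).injective).ge
  obtain ⟨⟨x, c⟩, rfl⟩ := (grid a b ν).surjective y
  obtain ⟨hx, r, rfl⟩ := mem_leftBlock.1 hy
  rw [shear_grid]
  exact mem_leftBlock.2 ⟨hx, r, rfl⟩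

/-- The edges that the placement `σ` puts on the unions of the left and right blocks matched
by `π`. -/
def matchingEdges (a b : ℕ) (σ : Perm (Fin ((a + b) * ν))) (π : Perm (Fin ν)) :
    Finset (Finset (Fin ((a + b) * ν))) :=
  univ.image fun i => (leftBlock a b i ∪ rightBlock a b (π i)).image σ

open scoped Fin.CommRing in
theorem finEquiv_symm_natCast (n m : ℕ) [NeZero n] :
    (ZMod.finEquiv n).symm (m : ZMod n) = Fin.ofNat n m :=
  map_natCast (ZMod.finEquiv n).symm m

theorem matchingEdges_eq_typeCycleEdges [NeZero ((a + b) * ν)] (hab : 0 < a + b)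
    (hXY : IsBlockSystem a b (leftBlock a b (ν := ν)) (rightBlock a b))
    (σ : Perm (Fin ((a + b) * ν))) (π : Perm (Fin ν)) :
    matchingEdges a b σ π = typeCycleEdges ((a + b) * ν) (2 * a + b) (a + b)
      ((ZMod.finEquiv ((a + b) * ν)).symm.toEquiv.trans ((shear a b π).trans σ)) := by
  have hwindow (i : Fin ν) : (leftBlock a b i ∪ rightBlock a b (π i)).image σ =
      (range (2 * a + b)).image fun j => σ (shear a b π
        ((ZMod.finEquiv ((a + b) * ν)).symm ((i * (a + b) + j : ℕ) : ZMod _))) := by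
    rw [← image_shear_leftBlock π, ← image_shear_rightBlock π, ← image_union,
      leftBlock_union_rightBlock hXY, image_image, image_image]
    simp only [finEquiv_symm_natCast]
    rfl
  rw [matchingEdges, typeCycleEdges, Nat.mul_div_cancel_left ν hab]
  ext e
  simp only [hwindow, mem_image, mem_univ, true_and, mem_range]
  exact ⟨fun ⟨i, hi⟩ => ⟨i, i.isLt, hi⟩, fun ⟨i, hi, he⟩ => ⟨⟨i, hi⟩, he⟩⟩

theorem isTypeHamCycle_matchingEdges {H : Finset (Finset (Fin ((a + b) * ν)))} (hab : 0 < a + b)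
    (hXY : IsBlockSystem a b (leftBlock a b (ν := ν)) (rightBlock a b))
    {σ : Perm (Fin ((a + b) * ν))} {π : Perm (Fin ν)}
    (hπ : ∀ i, blockGraph H (leftBlock a b) (rightBlock a b) σ i (π i)) :
    IsTypeHamCycle ((a + b) * ν) (2 * a + b) (a + b) H (matchingEdges a b σ π) := by
  have : NeZero ((a + b) * ν) := ⟨(Nat.mul_pos hab (NeZero.pos ν)).ne'⟩
  refine ⟨fun e he => ?_, ?_, _, matchingEdges_eq_typeCycleEdges hab hXY σ π⟩
  · obtain ⟨i, -, rfl⟩ := mem_image.1 he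
    exact hπ i
  · rw [matchingEdges, card_image_of_injective, card_univ, Fintype.card_fin,
      Nat.mul_div_cancel_left ν hab]
    exact fun i i' h => (hXY.injective_union (image_injective σ.injective h)).1

theorem hamPackingGE_of_pairwise_disjoint {n k ℓ : ℕ} {ι : Type*} [Fintype ι] (hℓ : 0 < n / ℓ)
    {H : Finset (Finset (Fin n))} {C : ι → Finset (Finset (Fin n))}
    (hC : ∀ z, IsTypeHamCycle n k ℓ H (C z)) (hdisj : Pairwise fun z z' => Disjoint (C z) (C z')) :
    HamPackingGE n k ℓ H (Fintype.card ι) := by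
  classical
  have hinj : Function.Injective C := fun z z' h => by
    by_contra hne
    have hempty : Disjoint (C z) (C z') := hdisj hne
    rw [h, disjoint_self_iff_empty] at hempty
    have hcard := (hC z').2.1
    rw [hempty, card_empty] at hcard
    exact hℓ.ne hcard
  refine ⟨univ.image C, ?_, ?_, ?_⟩
  · rw [card_image_of_injective _ hinj, card_univ]
  · simpa using hC
  · rw [coe_image, coe_univ, Set.image_univ]
    exact hdisj.range_pairwise

end HamiltonCycles

section Packing

/-- Numbers for which the random construction succeeds in a `k`-uniform hypergraph of density `p`
on `n` vertices whose degrees deviate by `1.002 * u ^ 3`: it samples `N` placements of `ν` blocks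
on either side covering every `k`-set at most `Λ` times, and finds `r` perfect matchings in each
of the `N` thinned block graphs of density `p / Λ`. -/
structure PackingParameters (n ν k : ℕ) (u p : ℝ) (N Λ r : ℕ) : Prop where
  multiplicity_pos : 0 < Λ
  bad_placement_le :
    4 * n ^ (2 * k) * Real.exp (-((0.002 * u ^ 3 * p ^ 2 * ν) ^ 2 / (32 * n))) ≤ 0.01 * u
  expected_multiplicity_le :
    N * (ν ^ 2 / n.choose k : ℝ) ≤ (1 - 0.03 * u) * (1 - 0.01 * u) * Λ
  sampling_lt_one : n.choose k * Real.exp (-((0.03 * u) ^ 2 * Λ / 4)) < 1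
  thinning_lt_one :
    2 * (N * ν ^ 2) * Real.exp (-((0.006 * u ^ 3) ^ 2 * (p / Λ) ^ 2 * ν / 8)) < 1
  one_le_codegree_error : 1 ≤ 0.07 * u ^ 4 * (p / Λ) ^ 2 * ν
  matchings_le : r ≤ (1 - 1.9 * u) * (p / Λ) * ν

theorem PackingParameters.hamPackingGE {a b ν N Λ r : ℕ} {u p : ℝ}
    {H : Finset (Finset (Fin ((a + b) * ν)))}
    (hpar : PackingParameters ((a + b) * ν) ν (2 * a + b) u p N Λ r) (hν : 3 ≤ ν) (ha : 0 < a)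
    (hb : 0 < b) (hu : 0 < u) (hu2 : u ≤ 1 / 2) (hp0 : 0 < p) (hp1 : p ≤ 1)
    (hA : NbhdRegular H (2 * a + b) (2 * a) {0, a} (1.002 * u ^ 3) p)
    (hB : NbhdRegular H (2 * a + b) b {0} (1.002 * u ^ 3) p) :
    HamPackingGE ((a + b) * ν) (2 * a + b) (a + b) H (N * r) := by
  classical
  have : NeZero ν := ⟨by lia⟩
  have : NeZero Λ := ⟨hpar.multiplicity_pos.ne'⟩
  have hXY := isBlockSystem_leftBlock_rightBlock hν ha hb
  have hbad := hXY.prob_not_regularPlacement_le hA hB (by positivity) (by nlinarith) hp0.le hp1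
    (δ := 0.002 * u ^ 3) (by positivity)
  obtain ⟨σ, hσ, hΛ⟩ := hXY.exists_regularPlacements (hbad.trans hpar.bad_placement_le)
    (by linarith) (by positivity) (by linarith) hpar.multiplicity_pos
    hpar.expected_multiplicity_le hpar.sampling_lt_one
  obtain ⟨π, hπ, hdisj⟩ := exists_labelDisjoint_perfectMatchings (u := u) (δ := 0.006 * u ^ 3)
    (G := fun t => blockGraph H (leftBlock a b) (rightBlock a b) (σ t))
    (e := fun t i j => (leftBlock a b i ∪ rightBlock a b j).image (σ t)) rfl (fun t => (hσ t).1)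
    (fun t => by convert (hσ t).2; exact flip_blockGraph H _ _ (σ t))
    (fun t i i' j j' h => hXY.injective_union (image_injective (σ t).injective h))
    (fun f => by convert hΛ f)
    (by positivity) hp0 hp1 (by positivity) (by rw [Fintype.card_fin]; lia)
    (by simpa only [Fintype.card_fin] using hpar.thinning_lt_one) (by linarith) hu hu2
    (by simpa only [Fintype.card_fin] using hpar.one_le_codegree_error)
    (by simpa only [Fintype.card_fin] using hpar.matchings_le)
  have hpacking := hamPackingGE_of_pairwise_disjoint
    (C := fun z : Fin N × Fin r => matchingEdges a b (σ z.1) (π z.1 z.2))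
    (by rw [Nat.mul_div_cancel_left ν (by lia)]; lia)
    (fun z => isTypeHamCycle_matchingEdges (by lia) hXY (hπ z.1 z.2)) fun z z' hne => ?_
  · simpa using hpacking
  · refine disjoint_left.2 fun e he he' => hne ?_
    obtain ⟨i, -, rfl⟩ := mem_image.1 he
    obtain ⟨i', -, h⟩ := mem_image.1 he'
    exact Prod.ext_iff.2 (hdisj _ _ _ _ _ _ h.symm)

end Packing

section Parameters

theorem exists_natCast_le_two_mul {t : ℝ} (ht : 1 ≤ t) : ∃ m : ℕ, t ≤ m ∧ m ≤ 2 * t :=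
  ⟨⌈t⌉₊, Nat.le_ceil t, by linarith [Nat.ceil_lt_add_one (zero_le_one.trans ht)]⟩

theorem exists_natCast_le_sub_one_le {t : ℝ} (ht : 0 ≤ t) : ∃ m : ℕ, m ≤ t ∧ t - 1 ≤ m :=
  ⟨⌊t⌋₊, Nat.floor_le ht, (Nat.sub_one_lt_floor t).le⟩

theorem exp_neg_le_inv_pow {x X : ℝ} {m : ℕ} (hx : 0 < x) (hX : m * Real.log x ≤ X) :
    Real.exp (-X) ≤ (x ^ m)⁻¹ := by
  rwa [← Real.exp_log (pow_pos hx m), ← Real.exp_neg, Real.exp_le_exp, neg_le_neg_iff,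
    Real.log_pow]

/-- The range in which the random construction works for `k`-uniform hypergraphs of density `p` on
`n` vertices, with `u` the cube root of the deviation parameter `ε`: the assumption
`ε ^ 5 * n ^ (1 / 2) * p ^ 2 / log n ^ 3 → ∞` made quantitative and squared. -/
structure PackingRange (k n : ℕ) (u p : ℝ) : Prop where
  pos : 0 < u
  le_half : u ≤ 1 / 2
  density_pos : 0 < p
  density_le_one : p ≤ 1
  one_le_log : 1 ≤ Real.log n
  const_mul_log_pow_six_le : 10 ^ 16 * (k + 3) ^ 5 * Real.log n ^ 6 ≤ u ^ 30 * p ^ 4 * n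

namespace PackingRange

variable {k n ν N Λ : ℕ} {u p : ℝ} (h : PackingRange k n u p)
include h

theorem const_mul_log_pow_le {i j d : ℕ} (hi : i ≤ 30) (hj : j ≤ 4) (hd : d ≤ 6) :
    10 ^ 16 * (k + 3) ^ 5 * Real.log n ^ d ≤ u ^ i * p ^ j * n := by
  have hu := pow_le_pow_of_le_one h.pos.le (h.le_half.trans (by norm_num)) hi
  have hp := pow_le_pow_of_le_one h.density_pos.le h.density_le_one hj
  have := pow_pos h.density_pos j
  calc 10 ^ 16 * (k + 3) ^ 5 * Real.log n ^ d
      ≤ 10 ^ 16 * (k + 3) ^ 5 * Real.log n ^ 6 := by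
        gcongr
        exact h.one_le_log
    _ ≤ u ^ 30 * p ^ 4 * n := h.const_mul_log_pow_six_le
    _ ≤ u ^ i * p ^ j * n := by
        have := h.density_pos
        have := h.pos
        gcongr

theorem const_le_mul {i : ℕ} (hi : i ≤ 30) : 10 ^ 16 * (k + 3) ^ 5 ≤ u ^ i * n := by
  simpa using h.const_mul_log_pow_le hi (Nat.zero_le 4) (Nat.zero_le 6)

theorem const_le : 10 ^ 16 * (k + 3 : ℝ) ^ 5 ≤ n := by
  simpa using h.const_le_mul (Nat.zero_le 30)

theorem le_vertices : 10 ^ 16 ≤ (n : ℝ) := by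
  have hk : (1 : ℝ) ≤ (k + 3) ^ 5 := one_le_pow₀ (by linarith [(Nat.cast_nonneg k : (0 : ℝ) ≤ k)])
  linarith [h.const_le]

theorem log_le_placement_exponent (hν : (n : ℝ) ≤ k * ν) :
    (2 * k + 2 : ℕ) * Real.log n ≤ (0.002 * u ^ 3 * p ^ 2 * ν) ^ 2 / (32 * n) := by
  have hn := h.le_vertices
  have hL := h.one_le_log
  have hmain := h.const_mul_log_pow_le (i := 6) (d := 1) (by norm_num) le_rfl (by norm_num)
  rw [pow_one] at hmain
  have hk : (0 : ℝ) < k := by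
    by_contra! hk
    nlinarith [(Nat.cast_nonneg ν : (0 : ℝ) ≤ ν)]
  have hk5 : (2 * k + 2) * k ^ 2 ≤ (k + 3 : ℝ) ^ 5 := by
    nlinarith [pow_pos hk 2, pow_pos hk 3, pow_pos hk 4, pow_pos hk 5]
  rw [le_div_iff₀ (by positivity)]
  refine le_of_mul_le_mul_right ?_ (pow_pos hk 2)
  push_cast
  calc (2 * k + 2) * Real.log n * (32 * n) * k ^ 2
      = (2 * k + 2) * k ^ 2 * (32 * Real.log n * n) := by ring
    _ ≤ (k + 3) ^ 5 * (32 * Real.log n * n) := by gcongr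
    _ ≤ 0.002 ^ 2 * (10 ^ 16 * (k + 3) ^ 5 * Real.log n) * n := by
      have : 0 ≤ (k + 3) ^ 5 * Real.log n * n := by positivity
      linarith
    _ ≤ 0.002 ^ 2 * (u ^ 6 * p ^ 4 * n) * n := by gcongr
    _ = 0.002 ^ 2 * (u ^ 6 * p ^ 4) * n ^ 2 := by ring
    _ ≤ 0.002 ^ 2 * (u ^ 6 * p ^ 4) * (k * ν) ^ 2 := by
      have := h.density_pos
      have := h.pos
      gcongr
    _ = (0.002 * u ^ 3 * p ^ 2 * ν) ^ 2 * k ^ 2 := by ring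

theorem bad_placement_le (hν : (n : ℝ) ≤ k * ν) :
    4 * n ^ (2 * k) * Real.exp (-((0.002 * u ^ 3 * p ^ 2 * ν) ^ 2 / (32 * n))) ≤ 0.01 * u := by
  have hn := h.le_vertices
  calc 4 * n ^ (2 * k) * Real.exp (-((0.002 * u ^ 3 * p ^ 2 * ν) ^ 2 / (32 * n)))
      ≤ 4 * n ^ (2 * k) * (n ^ (2 * k + 2) : ℝ)⁻¹ := by
        gcongr
        exact exp_neg_le_inv_pow (by linarith) (h.log_le_placement_exponent hν)
    _ = 4 / n ^ 2 := by
        rw [pow_add]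
        field_simp
    _ ≤ 0.01 * u := by
        have hun := h.const_le_mul (i := 1) (by norm_num)
        have hk5 : (1 : ℝ) ≤ (k + 3) ^ 5 :=
          one_le_pow₀ (by linarith [(Nat.cast_nonneg k : (0 : ℝ) ≤ k)])
        rw [div_le_iff₀ (by positivity)]
        nlinarith

theorem exists_multiplicity : ∃ Λ : ℕ, 5000 * (k + 1) * Real.log n ≤ Λ * u ^ 2 ∧
    Λ * u ^ 2 ≤ 10000 * (k + 1) * Real.log n := by
  have hu := h.pos
  have hu2 := h.le_half
  have hL := h.one_le_log
  obtain ⟨Λ, hΛ, hΛ'⟩ := exists_natCast_le_two_mul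
    (t := 5000 * (k + 1) * Real.log n / u ^ 2) <| by
      rw [one_le_div (by positivity)]
      nlinarith [(Nat.cast_nonneg k : (0 : ℝ) ≤ k)]
  rw [div_le_iff₀ (by positivity)] at hΛ
  rw [← mul_div_assoc, le_div_iff₀ (by positivity)] at hΛ'
  exact ⟨Λ, hΛ, by linarith⟩

section Multiplicity

variable (hΛ : 5000 * (k + 1) * Real.log n ≤ Λ * u ^ 2)

include hΛ in
theorem le_multiplicity_mul : 5000 ≤ Λ * u ^ 2 := by
  have := h.one_le_log
  nlinarith [(Nat.cast_nonneg k : (0 : ℝ) ≤ k)]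

include hΛ in
theorem one_le_multiplicity : 1 ≤ (Λ : ℝ) := by
  have := h.le_multiplicity_mul hΛ
  have := h.pos
  nlinarith [h.le_half]

include hΛ in
theorem sampling_lt_one : n.choose k * Real.exp (-((0.03 * u) ^ 2 * Λ / 4)) < 1 := by
  have hn := h.le_vertices
  have hexponent : (k + 1 : ℕ) * Real.log n ≤ (0.03 * u) ^ 2 * Λ / 4 := by
    have : 0 ≤ (k + 1) * Real.log n := mul_nonneg (by positivity) (by linarith [h.one_le_log])
    push_cast
    linarith
  have hchoose : (n.choose k : ℝ) ≤ n ^ k := mod_cast Nat.choose_le_pow n k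
  calc n.choose k * Real.exp (-((0.03 * u) ^ 2 * Λ / 4))
      ≤ n ^ k * (n ^ (k + 1) : ℝ)⁻¹ := by
        gcongr
        exact exp_neg_le_inv_pow (by linarith) hexponent
    _ = 1 / n := by
        rw [pow_succ]
        field_simp
    _ < 1 := by
        rw [div_lt_one (by linarith)]
        linarith

variable (hΛ' : Λ * u ^ 2 ≤ 10000 * (k + 1) * Real.log n)

include hΛ' in
theorem multiplicity_le_vertices : (Λ : ℝ) ≤ n := by
  have hu := pow_pos h.pos 2
  have hL := h.one_le_log
  have hmain := h.const_mul_log_pow_le (i := 2) (j := 0) (d := 1) (by norm_num) (by norm_num)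
    (by norm_num)
  rw [pow_zero, pow_one, mul_one] at hmain
  have hk : (k + 1 : ℝ) ≤ (k + 3) ^ 5 := by
    linarith [le_self_pow₀ (by linarith [(Nat.cast_nonneg k : (0 : ℝ) ≤ k)] : (1 : ℝ) ≤ k + 3)
      (by norm_num : 5 ≠ 0)]
  refine le_of_mul_le_mul_right (hΛ'.trans ?_) hu
  nlinarith

include hΛ hΛ' in
theorem const_mul_log_le_codegree (hν : (n : ℝ) ≤ k * ν) :
    10 ^ 7 * (k + 3) * Real.log n ≤ u ^ 6 * (p / Λ) ^ 2 * ν := by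
  have hu := h.pos
  have hp := h.density_pos
  have hL := h.one_le_log
  have hΛ0 := h.one_le_multiplicity hΛ
  have hmain := h.const_mul_log_pow_le (i := 10) (j := 2) (d := 3) (by norm_num) (by norm_num)
    (by norm_num)
  have : (0 : ℝ) < k + 3 := by positivity
  rw [div_pow, mul_div_assoc', div_mul_eq_mul_div, le_div_iff₀ (by positivity)]
  refine le_of_mul_le_mul_right ?_ (by positivity : 0 < u ^ 4 * (k + 3))
  calc 10 ^ 7 * (k + 3) * Real.log n * Λ ^ 2 * (u ^ 4 * (k + 3))
      = 10 ^ 7 * (k + 3) ^ 2 * Real.log n * (Λ * u ^ 2) ^ 2 := by ring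
    _ ≤ 10 ^ 7 * (k + 3) ^ 2 * Real.log n * (10000 * (k + 1) * Real.log n) ^ 2 := by gcongr
    _ = 10 ^ 15 * (k + 3) ^ 2 * (k + 1) ^ 2 * Real.log n ^ 3 := by ring
    _ ≤ 10 ^ 16 * (k + 3) ^ 2 * (k + 3) ^ 3 * Real.log n ^ 3 := by
      have : (k + 1 : ℝ) ^ 2 ≤ (k + 3) ^ 3 := by nlinarith [(Nat.cast_nonneg k : (0 : ℝ) ≤ k)]
      gcongr <;> norm_num
    _ = 10 ^ 16 * (k + 3) ^ 5 * Real.log n ^ 3 := by ring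
    _ ≤ u ^ 10 * p ^ 2 * n := hmain
    _ ≤ u ^ 10 * p ^ 2 * ((k + 3) * ν) := by
      gcongr
      nlinarith [(Nat.cast_nonneg ν : (0 : ℝ) ≤ ν)]
    _ = u ^ 6 * p ^ 2 * ν * (u ^ 4 * (k + 3)) := by ring

include hΛ in
theorem density_div_multiplicity_le_one : p / Λ ≤ 1 := by
  have hΛ0 := h.one_le_multiplicity hΛ
  exact (div_le_one (by linarith)).2 (h.density_le_one.trans hΛ0)

include hΛ hΛ' in
theorem twenty_le_mul (hν : (n : ℝ) ≤ k * ν) : 20 ≤ u * (p / Λ) * ν := by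
  have hu := h.pos
  have hp := h.density_pos
  have hcodeg := h.const_mul_log_le_codegree hΛ hΛ' hν
  have hconst : 1 ≤ (k + 3) * Real.log n := by
    nlinarith [h.one_le_log, (Nat.cast_nonneg k : (0 : ℝ) ≤ k)]
  calc 20 ≤ 10 ^ 7 * (k + 3) * Real.log n := by linarith
    _ ≤ u ^ 6 * (p / Λ) ^ 2 * ν := hcodeg
    _ ≤ u ^ 1 * (p / Λ) ^ 1 * ν := by
        gcongr ?_ * ?_ * _
        · exact pow_le_pow_of_le_one hu.le (by linarith [h.le_half]) (by norm_num)
        · exact pow_le_pow_of_le_one (by positivity) (h.density_div_multiplicity_le_one hΛ)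
            (by norm_num)
    _ = u * (p / Λ) * ν := by rw [pow_one, pow_one]

include hΛ hΛ' in
theorem one_le_codegree_error (hν : (n : ℝ) ≤ k * ν) : 1 ≤ 0.07 * u ^ 4 * (p / Λ) ^ 2 * ν := by
  have hu := h.pos
  have hcodeg := h.const_mul_log_le_codegree hΛ hΛ' hν
  have hconst : 1 ≤ (k + 3) * Real.log n := by
    nlinarith [h.one_le_log, (Nat.cast_nonneg k : (0 : ℝ) ≤ k)]
  calc 1 ≤ 0.07 * (10 ^ 7 * (k + 3) * Real.log n) := by linarith
    _ ≤ 0.07 * (u ^ 6 * (p / Λ) ^ 2 * ν) := by gcongr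
    _ ≤ 0.07 * (u ^ 4 * (p / Λ) ^ 2 * ν) := by
        gcongr ?_ * (?_ * _ * _)
        exact pow_le_pow_of_le_one hu.le (by linarith [h.le_half]) (by norm_num)
    _ = 0.07 * u ^ 4 * (p / Λ) ^ 2 * ν := by ring

include hΛ hΛ' in
theorem thinning_lt_one (hν : (n : ℝ) ≤ k * ν) (hN : (N * ν ^ 2 : ℝ) ≤ Λ * n.choose k) :
    2 * (N * ν ^ 2) * Real.exp (-((0.006 * u ^ 3) ^ 2 * (p / Λ) ^ 2 * ν / 8)) < 1 := by
  have hn := h.le_vertices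
  have hexponent :
      (k + 3 : ℕ) * Real.log n ≤ (0.006 * u ^ 3) ^ 2 * (p / Λ) ^ 2 * ν / 8 := by
    have : 0 ≤ (k + 3) * Real.log n := mul_nonneg (by positivity) (by linarith [h.one_le_log])
    push_cast
    linarith [h.const_mul_log_le_codegree hΛ hΛ' hν]
  have hchoose : (n.choose k : ℝ) ≤ n ^ k := mod_cast Nat.choose_le_pow n k
  calc 2 * (N * ν ^ 2) * Real.exp (-((0.006 * u ^ 3) ^ 2 * (p / Λ) ^ 2 * ν / 8))
      ≤ 2 * (n * n ^ k) * (n ^ (k + 3) : ℝ)⁻¹ := by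
        gcongr ?_ * ?_
        · have := h.multiplicity_le_vertices hΛ'
          exact mul_le_mul_of_nonneg_left (hN.trans (by gcongr)) zero_le_two
        · exact exp_neg_le_inv_pow (by linarith) hexponent
    _ = 2 / n ^ 2 := by
        rw [pow_add]
        field_simp
    _ < 1 := by
        rw [div_lt_one (by positivity)]
        nlinarith

include hΛ in
theorem exists_sample_size {c : ℝ} (hc : (ν ^ 2 : ℝ) ≤ c) (hν : 0 < (ν : ℝ)) :
    ∃ N : ℕ, (N * (ν ^ 2 / c) : ℝ) ≤ (1 - 0.04 * u) * Λ ∧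
      (1 - 0.05 * u) * Λ * (c / ν ^ 2) ≤ N := by
  have hu := h.pos
  have hu2 := h.le_half
  have hc0 : 0 < c := lt_of_lt_of_le (by positivity) hc
  have hratio : 1 ≤ c / ν ^ 2 := (one_le_div (by positivity)).2 hc
  have hΛu : 1 ≤ 0.01 * u * Λ := by
    have := h.le_multiplicity_mul hΛ
    have := h.one_le_multiplicity hΛ
    nlinarith [mul_nonneg (mul_nonneg hu.le (by linarith : (0 : ℝ) ≤ Λ))
      (by linarith : 0 ≤ 1 - u)]
  obtain ⟨N, hN, hN'⟩ := exists_natCast_le_sub_one_le (t := (1 - 0.04 * u) * Λ * (c / ν ^ 2)) <|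
    mul_nonneg (mul_nonneg (by linarith) Λ.cast_nonneg) (by linarith)
  refine ⟨N, ?_, by nlinarith⟩
  calc (N * (ν ^ 2 / c) : ℝ) ≤ (1 - 0.04 * u) * Λ * (c / ν ^ 2) * (ν ^ 2 / c) := by gcongr
    _ = (1 - 0.04 * u) * Λ := by field_simp

include hΛ hΛ' in
theorem exists_matching_count (hν : (n : ℝ) ≤ k * ν) :
    ∃ r : ℕ, (r : ℝ) ≤ (1 - 1.9 * u) * (p / Λ) * ν ∧ (1 - 1.95 * u) * (p / Λ) * ν ≤ r := by
  have hu := h.pos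
  have hp := h.density_pos
  have hu2 := h.le_half
  obtain ⟨r, hr, hr'⟩ := exists_natCast_le_sub_one_le (t := (1 - 1.9 * u) * (p / Λ) * ν) <|
    mul_nonneg (mul_nonneg (by linarith) (by positivity)) ν.cast_nonneg
  exact ⟨r, hr, by linarith [h.twenty_le_mul hΛ hΛ' hν]⟩

end Multiplicity

theorem exists_packingParameters (hν : (n : ℝ) ≤ k * ν) (hc : ν ^ 2 ≤ n.choose k) :
    ∃ N Λ r, PackingParameters n ν k u p N Λ r ∧ (1 - 2 * u) * (p * n.choose k) / ν ≤ N * r := by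
  have hu := h.pos
  have hu2 := h.le_half
  have hp := h.density_pos
  have hc' : (ν ^ 2 : ℝ) ≤ n.choose k := mod_cast hc
  have hν0 : 0 < (ν : ℝ) := by
    have := h.le_vertices
    by_contra! hν0
    nlinarith [(Nat.cast_nonneg k : (0 : ℝ) ≤ k)]
  have hc0 : (0 : ℝ) < n.choose k := lt_of_lt_of_le (by positivity) hc'
  obtain ⟨Λ, hΛ, hΛ'⟩ := h.exists_multiplicity
  have hΛ0 := h.one_le_multiplicity hΛ
  obtain ⟨N, hN, hN'⟩ := h.exists_sample_size hΛ hc' hν0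
  obtain ⟨r, hr, hr'⟩ := h.exists_matching_count hΛ hΛ' hν
  have hcover : (N * ν ^ 2 : ℝ) ≤ Λ * n.choose k := by
    rw [← div_le_iff₀ hc0, mul_div_assoc]
    nlinarith
  refine ⟨N, Λ, r, ⟨mod_cast hΛ0, h.bad_placement_le hν, by nlinarith, h.sampling_lt_one hΛ,
    h.thinning_lt_one hΛ hΛ' hν hcover, h.one_le_codegree_error hΛ hΛ' hν, hr⟩, ?_⟩
  calc (1 - 2 * u) * (p * n.choose k) / ν
      ≤ (1 - 0.05 * u) * (1 - 1.95 * u) * (p * n.choose k) / ν := by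
        gcongr
        nlinarith
    _ = (1 - 0.05 * u) * Λ * (n.choose k / ν ^ 2) * ((1 - 1.95 * u) * (p / Λ) * ν) := by
        field_simp
    _ ≤ N * r := by
        refine mul_le_mul hN' hr' ?_ N.cast_nonneg
        exact mul_nonneg (mul_nonneg (by linarith) (by positivity)) hν0.le

end PackingRange

end Parameters

section BinomialCoefficients

theorem choose_succ_le_choose_sub_add (n c s : ℕ) :
    n.choose (c + 1) ≤ (n - s).choose (c + 1) + s * (n - 1).choose c := by
  induction s with
  | zero => simp
  | succ s ih =>
    rcases le_or_gt n s with hns | hsn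
    · rw [Nat.sub_eq_zero_of_le hns] at ih
      rw [Nat.sub_eq_zero_of_le (hns.trans s.le_succ)]
      nlinarith
    · rw [show n - s = n - (s + 1) + 1 by lia, Nat.choose_succ_succ] at ih
      have : (n - (s + 1)).choose c ≤ (n - 1).choose c := Nat.choose_le_choose c (by lia)
      nlinarith

theorem one_sub_div_mul_choose_le_choose_sub (n c s : ℕ) :
    (1 - (s * c : ℝ) / n) * n.choose c ≤ (n - s).choose c := by
  rcases c with - | c
  · simp
  rcases n with - | n
  · simp
  have habsorb : ((n + 1 : ℕ) : ℝ) * n.choose c = (n + 1).choose (c + 1) * (c + 1 : ℕ) :=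
    mod_cast Nat.add_one_mul_choose_eq n c
  have hsub : ((n + 1).choose (c + 1) : ℝ) ≤ (n + 1 - s).choose (c + 1) + s * n.choose c :=
    mod_cast choose_succ_le_choose_sub_add (n + 1) c s
  calc (1 - (s * (c + 1 : ℕ) : ℝ) / (n + 1 : ℕ)) * (n + 1).choose (c + 1)
      = (n + 1).choose (c + 1) - s * ((n + 1).choose (c + 1) * (c + 1 : ℕ)) / (n + 1 : ℕ) := by
        ring
    _ = (n + 1).choose (c + 1) - s * n.choose c := by
        rw [← habsorb]
        field_simp
    _ ≤ (n + 1 - s).choose (c + 1) := by linarith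

theorem one_sub_mul_choose_le {n k c s : ℕ} {ε : ℝ} (hε : 0 ≤ ε) (hε1 : ε ≤ 1) (hc : c ≤ k)
    (hs : s ≤ k) (hn : 1000 * k ^ 2 ≤ ε * n) :
    (1 - 1.002 * ε) * n.choose c ≤ (1 - ε) * (n - s).choose c := by
  have hloss : (s * c : ℝ) / n ≤ 0.001 * ε := by
    refine div_le_of_le_mul₀ n.cast_nonneg (by positivity) ?_
    have : (s * c : ℝ) ≤ k * k := by gcongr
    linarith
  calc (1 - 1.002 * ε) * n.choose c
      ≤ (1 - ε) * (1 - 0.001 * ε) * n.choose c := by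
        gcongr
        nlinarith
    _ ≤ (1 - ε) * (1 - s * c / n) * n.choose c := by
        gcongr
    _ ≤ (1 - ε) * (n - s).choose c := by
        rw [mul_assoc]
        gcongr
        exact one_sub_div_mul_choose_le_choose_sub n c s

end BinomialCoefficients

section HamiltonPackings

theorem HamPackingGE.mono {n k ℓ : ℕ} {H : Finset (Finset (Fin n))} {s t : ℝ}
    (h : HamPackingGE n k ℓ H t) (hst : s ≤ t) : HamPackingGE n k ℓ H s :=
  let ⟨𝒞, hcard, h⟩ := h
  ⟨𝒞, hst.trans hcard, h⟩

theorem hamPackingGE_of_nonpos {n k ℓ : ℕ} {H : Finset (Finset (Fin n))} {t : ℝ} (ht : t ≤ 0) :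
    HamPackingGE n k ℓ H t :=
  ⟨∅, by simpa using ht, by simp, by simp⟩

theorem edgeDensity_le_one {α : Type*} [Fintype α] {k : ℕ} {H : Finset (Finset α)}
    (hH : ∀ e ∈ H, #e = k) : (#H / (Fintype.card α).choose k : ℝ) ≤ 1 := by
  refine div_le_one_of_le₀ ?_ (Nat.cast_nonneg _)
  have hsub : H ⊆ powersetCard k univ := fun e he => mem_powersetCard.2 ⟨subset_univ e, hH e he⟩
  simpa using card_le_card hsub

namespace PackingRange

theorem of_le_div_log {k n : ℕ} {u p : ℝ} (hu : 0 < u) (hu2 : u ≤ 1 / 2) (hp : 0 < p) (hp1 : p ≤ 1)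
    (hlog : 1 ≤ Real.log n)
    (hun : 10 ^ 16 * (k + 3) ^ 5 ≤ (u ^ 3) ^ 5 * √n * p ^ 2 / Real.log n ^ 3) :
    PackingRange k n u p := by
  refine ⟨hu, hu2, hp, hp1, hlog, ?_⟩
  set K : ℝ := 10 ^ 16 * (k + 3) ^ 5
  have hK : 1 ≤ K := by
    have : (1 : ℝ) ≤ (k + 3) ^ 5 := one_le_pow₀ (by linarith [(Nat.cast_nonneg k : (0 : ℝ) ≤ k)])
    linarith
  rw [le_div_iff₀ (by positivity)] at hun
  calc K * Real.log n ^ 6 ≤ K * (K * Real.log n ^ 6) :=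
        le_mul_of_one_le_left (by positivity) hK
    _ = (K * Real.log n ^ 3) ^ 2 := by ring
    _ ≤ ((u ^ 3) ^ 5 * √n * p ^ 2) ^ 2 := by gcongr
    _ = u ^ 30 * p ^ 4 * √n ^ 2 := by ring
    _ = u ^ 30 * p ^ 4 * n := by rw [Real.sq_sqrt n.cast_nonneg]

theorem thousand_mul_sq_le {k n : ℕ} {u p : ℝ} (h : PackingRange k n u p) :
    1000 * k ^ 2 ≤ u ^ 3 * n := by
  refine le_trans ?_ (h.const_le_mul (i := 3) (by norm_num))
  have hk : (k : ℝ) ^ 2 ≤ (k + 3) ^ 2 := by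
    gcongr
    linarith
  have hk5 : (k + 3 : ℝ) ^ 2 ≤ (k + 3) ^ 5 := by
    gcongr
    · linarith [(Nat.cast_nonneg k : (0 : ℝ) ≤ k)]
    · norm_num
  linarith [sq_nonneg (k + 3 : ℝ)]

theorem nbhdRegular {n k s c m : ℕ} {H : Finset (Finset (Fin n))} {I : Set ℕ} {u p : ℝ}
    (h : PackingRange k n u p) (hsc : s + c = k) (hm : m ≤ n)
    (hdeg : ∀ S : Finset (Fin n), #S = s → ⌈(1 - u ^ 3) * (n - s).choose c * p⌉₊ ≤ hDeg n k H S)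
    (hcodeg : ∀ S T : Finset (Fin n), #S = s → #T = s → #(S ∩ T) ∈ I →
      #(hNbhd n k H S ∩ hNbhd n k H T) ≤ ⌊(1 + u ^ 3) * m.choose c * p ^ 2⌋₊) :
    NbhdRegular H k s I (1.002 * u ^ 3) p := by
  have hu := h.pos
  have hp := h.density_pos
  have hu1 : u ^ 3 ≤ 1 := pow_le_one₀ hu.le (by linarith [h.le_half])
  obtain rfl : c = k - s := by lia
  refine ⟨fun S hS => ?_, fun S T hS hT hST => ?_⟩
  · calc (1 - 1.002 * u ^ 3) * p * n.choose (k - s)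
        = (1 - 1.002 * u ^ 3) * n.choose (k - s) * p := by ring
      _ ≤ (1 - u ^ 3) * (n - s).choose (k - s) * p := by
          refine mul_le_mul_of_nonneg_right ?_ hp.le
          exact one_sub_mul_choose_le (by positivity) hu1 (k.sub_le s) (by lia : s ≤ k)
            h.thousand_mul_sq_le
      _ ≤ hDeg n k H S := (Nat.le_ceil _).trans (Nat.cast_le.2 (hdeg S hS))
  · calc (#(hNbhd n k H S ∩ hNbhd n k H T) : ℝ)
        ≤ (1 + u ^ 3) * m.choose (k - s) * p ^ 2 :=
          (Nat.cast_le.2 (hcodeg S T hS hT hST)).trans (Nat.floor_le (by positivity))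
      _ ≤ (1 + 1.002 * u ^ 3) * n.choose (k - s) * p ^ 2 := by
          gcongr ?_ * ?_ * _
          · linarith [pow_pos hu 3]
          · exact mod_cast Nat.choose_le_choose (k - s) hm
      _ = (1 + 1.002 * u ^ 3) * p ^ 2 * n.choose (k - s) := by ring

theorem hamPackingGE {k ℓ ν : ℕ} {u p : ℝ} {H : Finset (Finset (Fin (ℓ * ν)))}
    (h : PackingRange k (ℓ * ν) u p) (hkl : k < 2 * ℓ) (hlk : ℓ < k) (hν : 3 ≤ ν)
    (hp : p = #H / (ℓ * ν).choose k)
    (hA : NbhdRegular H k (2 * (k - ℓ)) {0, k - ℓ} (1.002 * u ^ 3) p)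
    (hB : NbhdRegular H k (2 * ℓ - k) {0} (1.002 * u ^ 3) p) :
    HamPackingGE (ℓ * ν) k ℓ H ((1 - 2 * u) * #H / ν) := by
  obtain ⟨a, b, ha, hb, rfl, rfl⟩ : ∃ a b, 0 < a ∧ 0 < b ∧ ℓ = a + b ∧ k = 2 * a + b :=
    ⟨k - ℓ, 2 * ℓ - k, by lia, by lia, by lia, by lia⟩
  rw [show 2 * a + b - (a + b) = a by lia] at hA
  rw [show 2 * (a + b) - (2 * a + b) = b by lia] at hB
  have : NeZero ν := ⟨by lia⟩
  have hchoose := (isBlockSystem_leftBlock_rightBlock hν ha hb).sq_le_choose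
  have hn : ((a + b) * ν : ℕ) ≤ ((2 * a + b : ℕ) * ν : ℝ) := by
    exact mod_cast Nat.mul_le_mul_right ν (by lia)
  obtain ⟨N, Λ, r, hpar, hNr⟩ := h.exists_packingParameters hn hchoose
  have hcard : (#H : ℝ) = p * ((a + b) * ν).choose (2 * a + b) := by
    have : 0 < ((a + b) * ν).choose (2 * a + b) := lt_of_lt_of_le (by positivity) hchoose
    rw [hp]
    field_simp
  rw [hcard]
  exact (hpar.hamPackingGE hν ha hb h.pos h.le_half h.density_pos h.density_le_one hA hB).mono hNr

end PackingRange

theorem pos_of_pos_pow_mul_sqrt_mul_sq {ε x y p : ℝ} (hp : 0 ≤ p) (hy : 0 ≤ y)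
    (h : 0 < ε ^ 5 * √x * p ^ 2 / y) : 0 < ε ∧ 0 < p := by
  have hnum : 0 < ε ^ 5 * √x * p ^ 2 := pos_of_mul_pos_left h (inv_nonneg.2 hy)
  have hpow : 0 < ε ^ 5 := pos_of_mul_pos_left (pos_of_mul_pos_left hnum (sq_nonneg p))
    (Real.sqrt_nonneg x)
  exact ⟨(Odd.pow_pos_iff (by decide)).1 hpow, hp.lt_of_ne' fun hp0 => by simp [hp0] at hnum⟩

end HamiltonPackings

theorem stmt_2_general {k ℓ ν : ℕ} (hkl : k < 2 * ℓ) (hlk : ℓ < k) (hν : 3 ≤ ν)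
    {H : Finset (Finset (Fin (ℓ * ν)))} (huniform : ∀ e ∈ H, #e = k)
    {p : ℝ} (hp : p = #H / (ℓ * ν).choose k)
    {ε : ℝ} (hε : 10 ^ 16 * (k + 3) ^ 5 ≤
      ε ^ 5 * √(ℓ * ν : ℕ) * p ^ 2 / Real.log (ℓ * ν : ℕ) ^ 3)
    (hPa : ∀ S : Finset (Fin (ℓ * ν)), #S = 2 * (k - ℓ) →
      ⌈(1 - ε) * (ℓ * ν - 2 * (k - ℓ)).choose (2 * ℓ - k) * p⌉₊ ≤ hDeg (ℓ * ν) k H S)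
    (hPb : ∀ S : Finset (Fin (ℓ * ν)), #S = 2 * ℓ - k →
      ⌈(1 - ε) * (ℓ * ν - (2 * ℓ - k)).choose (2 * (k - ℓ)) * p⌉₊ ≤ hDeg (ℓ * ν) k H S)
    (hPe : ∀ S T : Finset (Fin (ℓ * ν)), #S = 2 * ℓ - k → #T = 2 * ℓ - k → Disjoint S T →
      #(hNbhd (ℓ * ν) k H S ∩ hNbhd (ℓ * ν) k H T) ≤
        ⌊(1 + ε) * (ℓ * ν - 2 * (2 * ℓ - k)).choose (2 * (k - ℓ)) * p ^ 2⌋₊)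
    (hPf : ∀ S T : Finset (Fin (ℓ * ν)), #S = 2 * (k - ℓ) → #T = 2 * (k - ℓ) →
      #(S ∩ T) = 0 ∨ #(S ∩ T) = k - ℓ →
      #(hNbhd (ℓ * ν) k H S ∩ hNbhd (ℓ * ν) k H T) ≤
        ⌊(1 + ε) * (ℓ * ν).choose (2 * ℓ - k) * p ^ 2⌋₊) :
    HamPackingGE (ℓ * ν) k ℓ H ((1 - 2 * ε ^ (1 / 3 : ℝ)) * #H / ν) := by
  have hlog : 1 ≤ Real.log (ℓ * ν : ℕ) := by
    have : (3 : ℝ) ≤ (ℓ * ν : ℕ) := mod_cast (by nlinarith : 3 ≤ ℓ * ν)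
    rw [Real.le_log_iff_exp_le (by linarith)]
    linarith [Real.exp_one_lt_three]
  obtain ⟨hε0, hp0⟩ := pos_of_pos_pow_mul_sqrt_mul_sq (hp ▸ by positivity) (by positivity)
    (lt_of_lt_of_le (by positivity) hε)
  have hp1 : p ≤ 1 := by simpa [hp] using edgeDensity_le_one huniform
  obtain ⟨u, hu, rfl⟩ : ∃ u, 0 < u ∧ ε = u ^ 3 := ⟨ε ^ ((3 : ℕ) : ℝ)⁻¹, by positivity,
    (Real.rpow_inv_natCast_pow hε0.le three_ne_zero).symm⟩
  rw [show (u ^ 3) ^ (1 / 3 : ℝ) = u by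
    simpa using Real.pow_rpow_inv_natCast hu.le three_ne_zero]
  rcases le_or_gt u (1 / 2) with hu2 | hu2
  · have h := PackingRange.of_le_div_log hu hu2 hp0 hp1 hlog hε
    refine h.hamPackingGE hkl hlk hν hp (h.nbhdRegular (by lia) le_rfl hPa hPf)
      (h.nbhdRegular (by lia) (Nat.sub_le _ (2 * (2 * ℓ - k))) hPb
        fun S T hS hT hST => ?_)
    exact hPe S T hS hT (disjoint_iff_inter_eq_empty.2 (card_eq_zero.1 hST))
  · refine hamPackingGE_of_nonpos (div_nonpos_of_nonpos_of_nonneg ?_ ν.cast_nonneg)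
    exact mul_nonpos_of_nonpos_of_nonneg (by linarith) (Nat.cast_nonneg _)

/-- Theorem 3 of the paper: let `k/2 < ℓ < k`, `ℓ ∣ n` (we write `n = ℓ j`),
let `H` be a `k`-uniform hypergraph on `[n]` with `m` edges and density `p = m/C(n,k)`, and
let `ε < 1` with `ε⁵ n^{1/2} p²/log³ n → ∞`.  If `H` satisfies `P_a, …, P_f`, then (for
all large `n`) `H` contains at least `(1 - 2ε^{1/3}) m/ν_ℓ` pairwise edge-disjoint type-`ℓ`
Hamilton cycles, `ν_ℓ = n/ℓ = j`. -/
theorem stmt_2 (k ℓ : ℕ) (hkl : k < 2 * ℓ) (hlk : ℓ < k)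
    (H : ∀ j : ℕ, Finset (Finset (Fin (ℓ * j))))
    (huniform : ∀ j, ∀ e ∈ H j, e.card = k)
    (p : ℕ → ℝ) (hp : ∀ j, p j = ((H j).card : ℝ) / (((ℓ * j).choose k : ℕ) : ℝ))
    (ε : ℕ → ℝ) (hε1 : ∀ j, ε j < 1)
    (hεlim : Tendsto
      (fun j => (ε j) ^ 5 * Real.sqrt ((ℓ * j : ℕ) : ℝ) * (p j) ^ 2
                  / (Real.log ((ℓ * j : ℕ) : ℝ)) ^ 3) atTop atTop)
    (hPa : ∀ j, ∀ S : Finset (Fin (ℓ * j)), S.card = 2 * (k - ℓ) →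
      Nat.ceil ((1 - ε j) * (((ℓ * j - 2 * (k - ℓ)).choose (2 * ℓ - k) : ℕ) : ℝ) * p j)
        ≤ hDeg (ℓ * j) k (H j) S)
    (hPb : ∀ j, ∀ S : Finset (Fin (ℓ * j)), S.card = 2 * ℓ - k →
      Nat.ceil ((1 - ε j) * (((ℓ * j - (2 * ℓ - k)).choose (2 * (k - ℓ)) : ℕ) : ℝ) * p j)
        ≤ hDeg (ℓ * j) k (H j) S)
    (hPc : ∀ j, ∀ S : Finset (Fin (ℓ * j)), S.card = 2 * (k - ℓ) + 1 →
      hDeg (ℓ * j) k (H j) S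
        ≤ Nat.floor ((1 + ε j) * (((ℓ * j - (2 * k - 2 * ℓ + 1)).choose (2 * ℓ - k - 1) : ℕ) : ℝ) * p j))
    (hPd : ∀ j, ∀ S : Finset (Fin (ℓ * j)), S.card = 2 * ℓ - k + 1 →
      hDeg (ℓ * j) k (H j) S
        ≤ Nat.floor ((1 + ε j) * (((ℓ * j - (2 * ℓ - k + 1)).choose (2 * (k - ℓ) - 1) : ℕ) : ℝ) * p j))
    (hPe : ∀ j, ∀ S₁ S₂ : Finset (Fin (ℓ * j)),
      S₁.card = 2 * ℓ - k → S₂.card = 2 * ℓ - k → Disjoint S₁ S₂ →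
      (hNbhd (ℓ * j) k (H j) S₁ ∩ hNbhd (ℓ * j) k (H j) S₂).card
        ≤ Nat.floor ((1 + ε j) * (((ℓ * j - 2 * (2 * ℓ - k)).choose (2 * (k - ℓ)) : ℕ) : ℝ) * (p j) ^ 2))
    (hPf : ∀ j, ∀ S₁ S₂ : Finset (Fin (ℓ * j)),
      S₁.card = 2 * (k - ℓ) → S₂.card = 2 * (k - ℓ) →
      ((S₁ ∩ S₂).card = 0 ∨ (S₁ ∩ S₂).card = k - ℓ) →
      (hNbhd (ℓ * j) k (H j) S₁ ∩ hNbhd (ℓ * j) k (H j) S₂).card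
        ≤ Nat.floor ((1 + ε j) * (((ℓ * j).choose (2 * ℓ - k) : ℕ) : ℝ) * (p j) ^ 2)) :
    ∀ᶠ j in atTop,
      HamPackingGE (ℓ * j) k ℓ (H j)
        ((1 - 2 * (ε j) ^ ((1 : ℝ) / 3)) * ((H j).card : ℝ) / (j : ℝ)) := by
  filter_upwards [eventually_ge_atTop 3, hεlim.eventually_ge_atTop (10 ^ 16 * (k + 3) ^ 5)] with
    j hj hεj
  exact stmt_2_general hkl hlk hj (huniform j) (hp j) hεj (hPa j) (hPb j) (hPe j) (hPf j)
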